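/- arXiv:1507.03750 — 8 statements merged into one kernel-verified Lean document; each statement's English description precedes it below -/
import Mathlib

section
/- For every θ > 0, L(θ) = exp{(1 − (1/2) x*(θ))ᵀ D x*(θ)} · (2π)^{-n/2} (det Σ)^{-1/2} ∫_{ℝ^n} v_θ(z) exp{−(1/2) zᵀ D z} dz, where v_θ(u) = exp{(x*(θ))ᵀ D (e^u − 1 − u)}. (Equivalently, I(θ) = L(θ)/L̃(θ) = √(det(I + ΣΛ(θ))) · E[v_θ(W)] for W a centred Gaussian vector with covariance matrix Σ.) -/
open Real Matrix MeasureTheory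

/-!
Translate the variable of integration by `x*`. Since `D` is symmetric and `D x* = -θ e^{μ + x*}`,
the exponential sum `θ ∑ e^{μᵢ + x*ᵢ + zᵢ}` becomes `-(x*)ᵀ D e^z`, and expanding the quadratic form
turns `h_θ(x* + z)` into `-(1 - ½ x*)ᵀ D x* - (x*)ᵀ D (e^z - 1 - z) + ½ zᵀ D z`. The first term is
constant, the second is `-log v_θ(z)`, and the third is the Gaussian exponent.
-/

section QuadraticForm

variable {ι R : Type*} [Fintype ι]

theorem dotProduct_mulVec_eq_mulVec_dotProduct [NonUnitalCommSemiring R] {D : Matrix ι ι R}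
    (hD : D.IsSymm) (a b : ι → R) :
    a ⬝ᵥ D *ᵥ b = (D *ᵥ a) ⬝ᵥ b := by
  rw [dotProduct_mulVec, ← mulVec_transpose, hD.eq]

theorem add_dotProduct_mulVec_add_self [CommSemiring R] {D : Matrix ι ι R}
    (hD : D.IsSymm) (a b : ι → R) :
    (a + b) ⬝ᵥ D *ᵥ (a + b) = a ⬝ᵥ D *ᵥ a + 2 * (b ⬝ᵥ D *ᵥ a) + b ⬝ᵥ D *ᵥ b := by
  have cross : a ⬝ᵥ D *ᵥ b = b ⬝ᵥ D *ᵥ a := by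
    rw [dotProduct_mulVec_eq_mulVec_dotProduct hD, dotProduct_comm]
  rw [mulVec_add, add_dotProduct, dotProduct_add, dotProduct_add, cross]
  ring

end QuadraticForm

section GaussianIntegrability

variable {ι : Type*} [Fintype ι]

theorem integrable_comp_mulVec [DecidableEq ι] {E : Type*} [NormedAddCommGroup E]
    {A : Matrix ι ι ℝ} (hA : A.det ≠ 0) {f : (ι → ℝ) → E} (hf : Integrable f) :
    Integrable fun x => f (A *ᵥ x) := by
  have hmap : Integrable f (Measure.map (toLin' A) volume) := by
    rw [Real.map_matrix_volume_pi_eq_smul_volume_pi hA]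
    exact hf.smul_measure ENNReal.ofReal_ne_top
  exact hmap.comp_measurable (toLin' A).continuous_of_finiteDimensional.measurable

theorem integrable_exp_neg_mul_dotProduct_self {b : ℝ} (hb : 0 < b) :
    Integrable fun x : ι → ℝ => Real.exp (-b * (x ⬝ᵥ x)) := by
  have hprod : Integrable fun x : ι → ℝ => ∏ i, Real.exp (-b * x i ^ 2) :=
    Integrable.fintype_prod fun _ => integrable_exp_neg_mul_sq hb
  simpa only [← Real.exp_sum, ← Finset.mul_sum, dotProduct, ← pow_two] using hprod

open scoped MatrixOrder in
theorem exists_eq_transpose_mul_self_of_posDef [DecidableEq ι] {D : Matrix ι ι ℝ}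
    (hD : D.PosDef) : ∃ B : Matrix ι ι ℝ, B.det ≠ 0 ∧ D = Bᵀ * B := by
  obtain ⟨B, hB⟩ := CStarAlgebra.nonneg_iff_eq_star_mul_self.mp hD.posSemidef.nonneg
  have hDB : D = Bᵀ * B := by
    rw [hB, star_eq_conjTranspose, conjTranspose_eq_transpose_of_trivial]
  refine ⟨B, fun hdet => hD.det_pos.ne' ?_, hDB⟩
  rw [hDB, det_mul, hdet, mul_zero]

theorem integrable_exp_neg_mul_dotProduct_mulVec {D : Matrix ι ι ℝ} (hD : D.PosDef) {b : ℝ}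
    (hb : 0 < b) : Integrable fun x : ι → ℝ => Real.exp (-b * (x ⬝ᵥ D *ᵥ x)) := by
  classical
  obtain ⟨B, hdet, rfl⟩ := exists_eq_transpose_mul_self_of_posDef hD
  have hquad (x : ι → ℝ) : x ⬝ᵥ (Bᵀ * B) *ᵥ x = (B *ᵥ x) ⬝ᵥ (B *ᵥ x) := by
    rw [← mulVec_mulVec, dotProduct_mulVec, vecMul_transpose]
  simpa only [hquad] using
    integrable_comp_mulVec hdet (integrable_exp_neg_mul_dotProduct_self hb)

end GaussianIntegrability

section Saddlepoint

variable {ι : Type*} [Fintype ι]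

/-- The function `h_θ` of the paper: `exp (-h_θ)` is the integrand of the Laplace transform at `θ`
of a sum of lognormals whose logarithms have mean `μ` and precision matrix `D`. -/
noncomputable def laplaceExponent (θ : ℝ) (μ : ι → ℝ) (D : Matrix ι ι ℝ) (x : ι → ℝ) : ℝ :=
  θ * ∑ i, Real.exp (μ i + x i) + (1 / 2) * (x ⬝ᵥ D *ᵥ x)

/-- The function `v_θ` of the paper, with `xstar` the saddlepoint `x*(θ)`: the factor by which the
Laplace integrand, recentred at `xstar`, differs from a multiple of the Gaussian density. -/
noncomputable def saddlepointWeight (D : Matrix ι ι ℝ) (xstar u : ι → ℝ) : ℝ :=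
  Real.exp (xstar ⬝ᵥ D *ᵥ fun i => Real.exp (u i) - 1 - u i)

variable {θ : ℝ} {μ : ι → ℝ} {D : Matrix ι ι ℝ} {xstar : ι → ℝ}

theorem integrable_exp_neg_laplaceExponent (hθ : 0 ≤ θ) (hD : D.PosDef) :
    Integrable fun x => Real.exp (-laplaceExponent θ μ D x) := by
  have hgauss := integrable_exp_neg_mul_dotProduct_mulVec hD (one_half_pos (α := ℝ))
  refine hgauss.mono' (by unfold laplaceExponent; fun_prop) (ae_of_all _ fun x => ?_)
  have hsum : 0 ≤ θ * ∑ i, Real.exp (μ i + x i) := by positivity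
  rw [Real.norm_of_nonneg (Real.exp_nonneg _), Real.exp_le_exp, laplaceExponent]
  linarith

theorem mul_sum_exp_add_eq_neg_dotProduct {g : ι → ℝ}
    (hg : ∀ i, θ * Real.exp (μ i + xstar i) + g i = 0) (z : ι → ℝ) :
    θ * ∑ i, Real.exp (μ i + (z + xstar) i) = -(g ⬝ᵥ fun i => Real.exp (z i)) := by
  rw [Finset.mul_sum, dotProduct, ← Finset.sum_neg_distrib]
  refine Finset.sum_congr rfl fun i _ => ?_
  rw [Pi.add_apply, add_comm (z i), ← add_assoc, Real.exp_add]
  linear_combination Real.exp (z i) * hg i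

theorem laplaceExponent_add_saddlepoint (hD : D.IsSymm)
    (hx : ∀ i, θ * Real.exp (μ i + xstar i) + (D *ᵥ xstar) i = 0) (z : ι → ℝ) :
    laplaceExponent θ μ D (z + xstar) =
      -((1 - (1 / 2 : ℝ) • xstar) ⬝ᵥ D *ᵥ xstar) -
        (xstar ⬝ᵥ D *ᵥ fun i => Real.exp (z i) - 1 - z i) + (1 / 2) * (z ⬝ᵥ D *ᵥ z) := by
  have hweight : xstar ⬝ᵥ D *ᵥ (fun i => Real.exp (z i) - 1 - z i) =
      ((D *ᵥ xstar) ⬝ᵥ fun i => Real.exp (z i)) - 1 ⬝ᵥ D *ᵥ xstar - xstar ⬝ᵥ D *ᵥ z := by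
    rw [dotProduct_comm 1, dotProduct_mulVec_eq_mulVec_dotProduct hD,
      dotProduct_mulVec_eq_mulVec_dotProduct hD, ← dotProduct_sub, ← dotProduct_sub]
    rfl
  rw [laplaceExponent, mul_sum_exp_add_eq_neg_dotProduct hx, add_comm z,
    add_dotProduct_mulVec_add_self hD, hweight, sub_dotProduct, smul_dotProduct, smul_eq_mul,
    dotProduct_mulVec_eq_mulVec_dotProduct hD xstar z, dotProduct_comm (D *ᵥ xstar) z]
  ring

theorem exp_neg_laplaceExponent_add_saddlepoint (hD : D.IsSymm)
    (hx : ∀ i, θ * Real.exp (μ i + xstar i) + (D *ᵥ xstar) i = 0) (z : ι → ℝ) :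
    Real.exp (-laplaceExponent θ μ D (z + xstar)) =
      Real.exp ((1 - (1 / 2 : ℝ) • xstar) ⬝ᵥ D *ᵥ xstar) *
        (saddlepointWeight D xstar z * Real.exp (-(1 / 2) * (z ⬝ᵥ D *ᵥ z))) := by
  rw [laplaceExponent_add_saddlepoint hD hx, saddlepointWeight, ← Real.exp_add, ← Real.exp_add]
  ring_nf

theorem laplace_transform_saddlepoint_decomposition_v_general (hD : D.IsSymm)
    (hx : ∀ i, θ * Real.exp (μ i + xstar i) + (D *ᵥ xstar) i = 0)
    (hint : Integrable fun x => Real.exp (-laplaceExponent θ μ D x)) :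
    (Integrable fun z => saddlepointWeight D xstar z * Real.exp (-(1 / 2) * (z ⬝ᵥ D *ᵥ z))) ∧
      ∫ x, Real.exp (-laplaceExponent θ μ D x) =
        Real.exp ((1 - (1 / 2 : ℝ) • xstar) ⬝ᵥ D *ᵥ xstar) *
          ∫ z, saddlepointWeight D xstar z * Real.exp (-(1 / 2) * (z ⬝ᵥ D *ᵥ z)) := by
  have hpoint := exp_neg_laplaceExponent_add_saddlepoint hD hx
  constructor
  · have hshift := hint.comp_add_right xstar
    simp only [hpoint] at hshift
    exact (integrable_const_mul_iff (Real.exp_ne_zero _).isUnit _).mp hshift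
  · rw [← integral_add_right_eq_self _ xstar, ← integral_const_mul]
    simp only [hpoint]

end Saddlepoint

/-- For every θ > 0,
`L(θ) = exp{(1 − ½x*)ᵀ D x*} · (2π)^{-n/2} (det Σ)^{-1/2} ∫ v_θ(z) exp{−½ zᵀ D z} dz`,
where `v_θ(u) = exp{(x*)ᵀ D (e^u − 1 − u)}` and `x*` solves `θ e^{μ+x} + Dx = 0`. -/
theorem laplace_transform_saddlepoint_decomposition_v
    (n : ℕ) (hn : 1 ≤ n) (μ : Fin n → ℝ) (Sig : Matrix (Fin n) (Fin n) ℝ)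
    (hSig : Sig.PosDef) (θ : ℝ) (hθ : 0 < θ)
    (D : Matrix (Fin n) (Fin n) ℝ) (hD : D = Sig⁻¹)
    (xstar : Fin n → ℝ)
    (hx : ∀ i, θ * Real.exp (μ i + xstar i) + D.mulVec xstar i = 0) :
    let L : ℝ := (2 * π) ^ (-(n : ℝ) / 2) * Sig.det ^ (-(1 : ℝ) / 2) *
      ∫ x : Fin n → ℝ,
        Real.exp (-(θ * ∑ i, Real.exp (μ i + x i) + (1 / 2) * (x ⬝ᵥ D.mulVec x)))
    let v : (Fin n → ℝ) → ℝ := fun u =>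
      Real.exp (xstar ⬝ᵥ D.mulVec (fun i => Real.exp (u i) - 1 - u i))
    L = Real.exp ((1 - (1 / 2 : ℝ) • xstar) ⬝ᵥ D.mulVec xstar) *
        ((2 * π) ^ (-(n : ℝ) / 2) * Sig.det ^ (-(1 : ℝ) / 2) *
          ∫ z : Fin n → ℝ, v z * Real.exp (-(1 / 2) * (z ⬝ᵥ D.mulVec z))) := by
  intro _ _
  have hDpos : D.PosDef := hD ▸ hSig.inv
  have hDsymm : D.IsSymm := isHermitian_iff_isSymm.mp hDpos.isHermitian
  have hint := integrable_exp_neg_laplaceExponent (μ := μ) hθ.le hDpos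
  have hdecomp := (laplace_transform_saddlepoint_decomposition_v_general hDsymm hx hint).2
  exact (congrArg (_ * ·) hdecomp).trans (mul_left_comm ..)
end

section
/- Assume every row sum a_i = ∑_{j=1}^n D_{ij} of D = Σ^{-1} is strictly positive. Then for each i ∈ {1,…,n}, the remainder r_i(θ) := x*_i(θ) + log θ − log log θ + μ_i − log a_i satisfies r_i(θ) = O(log log θ / log θ) as θ → ∞; in particular x*_i(θ) = −log θ + log log θ − μ_i + log a_i + o(1) as θ → ∞. -/
open Real Matrix Filter Asymptotics

/-!
The equation `θ e^{μ+x} + D x = 0` is that of a monotone operator, so it admits an a posteriori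
error bound: if `x` solves it and `y` leaves the residual `g`, pairing the difference of the two
equations with `r = x - y` discards the nonnegative quadratic form of `D` and leaves
`∑ wᵢ rᵢ (e^{rᵢ} - 1) ≤ ‖r‖∞ ‖g‖₁` for `w = θ e^{μ+y}`. Take `y = log a - μ + log log θ - log θ`
with `a = D 1`. Then `w = a log θ`, which cancels the part of `D y` of order `log θ`, so that the
residual is of order `log log θ`, whence `‖r‖ = O(log log θ / log θ)`.
-/

section ErrorBound

lemma sq_le_one_add_abs_mul_mul_exp_sub_one (t : ℝ) : t ^ 2 ≤ (1 + |t|) * (t * (exp t - 1)) := by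
  rcases le_total 0 t with ht | ht
  · rw [abs_of_nonneg ht]
    have hexp : t * t ≤ t * (exp t - 1) :=
      mul_le_mul_of_nonneg_left (by linarith [add_one_le_exp t]) ht
    nlinarith [mul_nonneg ht (mul_self_nonneg t)]
  · rw [abs_of_nonpos ht]
    have hexp : (1 - t) * exp t ≤ 1 := by
      calc (1 - t) * exp t ≤ exp (-t) * exp t := by gcongr; linarith [add_one_le_exp (-t)]
        _ = 1 := by rw [← exp_add, neg_add_cancel, exp_zero]
    nlinarith [mul_nonneg (neg_nonneg.2 ht) (sub_nonneg.2 hexp)]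

variable {ι : Type*} [Fintype ι]

lemma mul_sq_norm_le_sum_mul_exp_sub_one {m : ℝ} (hm : 0 ≤ m) {w : ι → ℝ} (hw : ∀ i, m ≤ w i)
    (r : ι → ℝ) : m * ‖r‖ ^ 2 ≤ (1 + ‖r‖) * ∑ i, w i * (r i * (exp (r i) - 1)) := by
  have hterm (i : ι) : 0 ≤ r i * (exp (r i) - 1) :=
    nonneg_of_mul_nonneg_right
      ((sq_nonneg _).trans (sq_le_one_add_abs_mul_mul_exp_sub_one (r i))) (by positivity)
  have hsum (i : ι) : w i * (r i * (exp (r i) - 1)) ≤ ∑ i, w i * (r i * (exp (r i) - 1)) :=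
    Finset.single_le_sum (f := fun i => w i * (r i * (exp (r i) - 1)))
      (fun j _ => mul_nonneg (hm.trans (hw j)) (hterm j)) (Finset.mem_univ i)
  rcases isEmpty_or_nonempty ι with _ | _
  · simp [Subsingleton.elim r 0]
  · obtain ⟨k, hk : ‖r k‖ = ‖r‖⟩ := (IsGreatest.pi_norm r).1
    calc m * ‖r‖ ^ 2 = m * r k ^ 2 := by rw [← hk, norm_eq_abs, sq_abs]
      _ ≤ m * ((1 + ‖r‖) * (r k * (exp (r k) - 1))) := by
        rw [← hk, norm_eq_abs]
        gcongr
        exact sq_le_one_add_abs_mul_mul_exp_sub_one (r k)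
      _ = (1 + ‖r‖) * (m * (r k * (exp (r k) - 1))) := by ring
      _ ≤ (1 + ‖r‖) * (w k * (r k * (exp (r k) - 1))) := by
        gcongr
        exacts [hterm k, hw k]
      _ ≤ (1 + ‖r‖) * ∑ i, w i * (r i * (exp (r i) - 1)) := by
        gcongr
        exact hsum k

/-- The left-hand side `θ e^{μ+x} + D x` of the stationarity equation. For symmetric `D` it is the
gradient at `x` of `h_θ`. -/
noncomputable def stationarityMap (θ : ℝ) (μ : ι → ℝ) (D : Matrix ι ι ℝ) (x : ι → ℝ) : ι → ℝ :=
  fun i => θ * exp (μ i + x i) + (D *ᵥ x) i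

variable {θ : ℝ} {μ : ι → ℝ} {D : Matrix ι ι ℝ} {x y : ι → ℝ}

lemma sum_mul_exp_sub_one_le_norm_mul_sum_abs_stationarityMap (hD : ∀ v, 0 ≤ v ⬝ᵥ D *ᵥ v)
    (hx : stationarityMap θ μ D x = 0) :
    ∑ i, θ * exp (μ i + y i) * ((x - y) i * (exp ((x - y) i) - 1)) ≤
      ‖x - y‖ * ∑ i, |stationarityMap θ μ D y i| := by
  have hdiff (i : ι) : θ * exp (μ i + y i) * (exp ((x - y) i) - 1) =
      -stationarityMap θ μ D y i - (D *ᵥ (x - y)) i := by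
    have hexp : exp (μ i + x i) = exp (μ i + y i) * exp ((x - y) i) := by
      rw [← exp_add, Pi.sub_apply]
      ring_nf
    have hxi := congrFun hx i
    simp only [stationarityMap, mulVec_sub, Pi.sub_apply, Pi.zero_apply] at hexp hxi ⊢
    rw [hexp] at hxi
    linear_combination hxi
  calc ∑ i, θ * exp (μ i + y i) * ((x - y) i * (exp ((x - y) i) - 1))
      = ∑ i, (x - y) i * -stationarityMap θ μ D y i - (x - y) ⬝ᵥ D *ᵥ (x - y) := by
        rw [dotProduct, ← Finset.sum_sub_distrib]
        refine Finset.sum_congr rfl fun i _ => ?_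
        linear_combination (x - y) i * hdiff i
    _ ≤ ∑ i, (x - y) i * -stationarityMap θ μ D y i := sub_le_self _ (hD _)
    _ ≤ ∑ i, ‖x - y‖ * |stationarityMap θ μ D y i| := by
        refine Finset.sum_le_sum fun i _ => (le_abs_self _).trans ?_
        rw [abs_mul, abs_neg]
        gcongr
        exact norm_le_pi_norm (x - y) i
    _ = ‖x - y‖ * ∑ i, |stationarityMap θ μ D y i| := (Finset.mul_sum ..).symm

theorem sub_mul_norm_sub_le_sum_abs_stationarityMap (hD : ∀ v, 0 ≤ v ⬝ᵥ D *ᵥ v)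
    (hx : stationarityMap θ μ D x = 0) {m : ℝ} (hm : 0 ≤ m)
    (hy : ∀ i, m ≤ θ * exp (μ i + y i)) :
    (m - ∑ i, |stationarityMap θ μ D y i|) * ‖x - y‖ ≤ ∑ i, |stationarityMap θ μ D y i| := by
  set G := ∑ i, |stationarityMap θ μ D y i|
  have hG : 0 ≤ G := Finset.sum_nonneg fun _ _ => abs_nonneg _
  have henergy : m * ‖x - y‖ ^ 2 ≤ (1 + ‖x - y‖) * (‖x - y‖ * G) :=
    (mul_sq_norm_le_sum_mul_exp_sub_one hm hy (x - y)).trans <| by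
      gcongr
      exact sum_mul_exp_sub_one_le_norm_mul_sum_abs_stationarityMap hD hx
  rcases (norm_nonneg (x - y)).eq_or_lt with hr | hr
  · rwa [← hr, mul_zero]
  · exact le_of_mul_le_mul_right (by linarith) hr

end ErrorBound

section Asymptotics

lemma isBigO_div_of_sub_mul_norm_le {α E : Type*} [SeminormedAddGroup E] {l : Filter α}
    {m G : α → ℝ} {r : α → E} (hm : ∀ᶠ t in l, 0 < m t) (hG : G =o[l] m)
    (h : ∀ᶠ t in l, (m t - G t) * ‖r t‖ ≤ G t) : r =O[l] fun t => G t / m t := by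
  refine IsBigO.of_bound 2 ?_
  filter_upwards [hm, hG.bound (half_pos one_pos), h] with t hmt hGt ht
  have hGm : G t ≤ m t / 2 := by
    rw [norm_eq_abs, norm_eq_abs, abs_of_pos hmt] at hGt
    linarith [le_abs_self (G t)]
  have hr : ‖r t‖ ≤ 2 * (G t / m t) := by
    rw [← mul_div_assoc, le_div_iff₀ hmt]
    calc ‖r t‖ * m t = 2 * ((m t - m t / 2) * ‖r t‖) := by ring
      _ ≤ 2 * ((m t - G t) * ‖r t‖) := by gcongr
      _ ≤ 2 * G t := by gcongr
  exact hr.trans (by gcongr; exact le_norm_self _)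

lemma isLittleO_log_comp_log_log_atTop : (fun θ : ℝ => log (log θ)) =o[atTop] log :=
  isLittleO_log_id_atTop.comp_tendsto tendsto_log_atTop

variable {ι : Type*} [Fintype ι] {θ : ℝ} {D : Matrix ι ι ℝ}

/-- The approximation `log a - μ + log log θ - log θ` of the solution of
`θ e^{μ+x} + D x = 0` as `θ → ∞`, where `a` is the vector of row sums of `D`. -/
noncomputable def leadingOrder (μ : ι → ℝ) (D : Matrix ι ι ℝ) (θ : ℝ) : ι → ℝ :=
  fun i => log (∑ j, D i j) - μ i + (log (log θ) - log θ)

lemma mul_exp_add_leadingOrder (μ : ι → ℝ) (hθ : 1 < θ) {i : ι} (ha : 0 < ∑ j, D i j) :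
    θ * exp (μ i + leadingOrder μ D θ i) = log θ * ∑ j, D i j := by
  have hsplit : μ i + leadingOrder μ D θ i = log (∑ j, D i j) + log (log θ) - log θ := by
    rw [leadingOrder]
    ring
  have hθ₀ : 0 < θ := one_pos.trans hθ
  rw [hsplit, exp_sub, exp_add, exp_log ha, exp_log (log_pos hθ), exp_log hθ₀]
  field_simp

lemma stationarityMap_leadingOrder (μ : ι → ℝ) (hθ : 1 < θ) {i : ι} (ha : 0 < ∑ j, D i j) :
    stationarityMap θ μ D (leadingOrder μ D θ) i =
      log (log θ) * ∑ j, D i j + (D *ᵥ fun k => log (∑ j, D k j) - μ k) i := by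
  have hmulVec : (D *ᵥ leadingOrder μ D θ) i =
      (D *ᵥ fun k => log (∑ j, D k j) - μ k) i + (log (log θ) - log θ) * ∑ j, D i j := by
    simp only [mulVec, dotProduct, leadingOrder, mul_add, Finset.sum_add_distrib,
      ← Finset.sum_mul]
    ring
  rw [stationarityMap, mul_exp_add_leadingOrder μ hθ ha, hmulVec]
  ring

lemma isBigO_sum_abs_stationarityMap_leadingOrder (μ : ι → ℝ) (ha : ∀ i, 0 < ∑ j, D i j) :
    (fun θ => ∑ i, |stationarityMap θ μ D (leadingOrder μ D θ) i|) =O[atTop]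
      fun θ => log (log θ) := by
  refine IsBigO.fun_sum fun i _ => IsBigO.abs_left ?_
  have hres : (fun θ => stationarityMap θ μ D (leadingOrder μ D θ) i) =ᶠ[atTop]
      fun θ => log (log θ) * ∑ j, D i j + (D *ᵥ fun k => log (∑ j, D k j) - μ k) i := by
    filter_upwards [eventually_gt_atTop 1] with θ hθ
    exact stationarityMap_leadingOrder μ hθ (ha i)
  have hconst (c : ℝ) : (fun _ : ℝ => c) =O[atTop] fun θ => log (log θ) :=
    (isLittleO_const_log_atTop.comp_tendsto tendsto_log_atTop).isBigO
  have hmul (c : ℝ) : (fun θ => log (log θ) * c) =O[atTop] fun θ => log (log θ) := by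
    simpa only [mul_comm c] using isBigO_const_mul_self c (fun θ => log (log θ)) atTop
  exact hres.trans_isBigO ((hmul _).add (hconst _))

theorem isBigO_sub_leadingOrder (hD : ∀ v, 0 ≤ v ⬝ᵥ D *ᵥ v) (ha : ∀ i, 0 < ∑ j, D i j)
    {μ : ι → ℝ} {xs : ℝ → ι → ℝ} (hxs : ∀ᶠ θ in atTop, stationarityMap θ μ D (xs θ) = 0) :
    (fun θ => xs θ - leadingOrder μ D θ) =O[atTop] fun θ => log (log θ) / log θ := by
  obtain ⟨m, hm, hma⟩ := Pi.exists_forall_pos_add_lt (x := 0) ha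
  have hG := isBigO_sum_abs_stationarityMap_leadingOrder μ ha
  have hlog : log =O[atTop] fun θ => m * log θ := isBigO_self_const_mul hm.ne' _ _
  have hlog_pos : ∀ᶠ θ in atTop, 0 < log θ := tendsto_log_atTop.eventually_gt_atTop 0
  have hdiv : (fun θ => xs θ - leadingOrder μ D θ) =O[atTop]
      fun θ => (∑ i, |stationarityMap θ μ D (leadingOrder μ D θ) i|) / (m * log θ) := by
    refine isBigO_div_of_sub_mul_norm_le (hlog_pos.mono fun _ => mul_pos hm)
      (hG.trans_isLittleO (isLittleO_log_comp_log_log_atTop.trans_isBigO hlog)) ?_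
    filter_upwards [hxs, eventually_gt_atTop 1, hlog_pos] with θ hx hθ hlogθ
    refine sub_mul_norm_sub_le_sum_abs_stationarityMap hD hx (mul_pos hm hlogθ).le fun i => ?_
    rw [mul_exp_add_leadingOrder μ hθ (ha i), mul_comm]
    gcongr
    simpa using (hma i).le
  have hinv : (fun θ => (m * log θ)⁻¹) =O[atTop] fun θ => (log θ)⁻¹ :=
    hlog.inv_rev (hlog_pos.mono fun _ hpos hzero => absurd hzero hpos.ne')
  simpa only [div_eq_mul_inv] using hdiv.trans (hG.mul hinv)

end Asymptotics

theorem minimiser_asymptotics_positive_row_sums_general {ι : Type*} [Fintype ι] (μ : ι → ℝ)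
    (D : Matrix ι ι ℝ) (hD : ∀ v, 0 ≤ v ⬝ᵥ D *ᵥ v) (ha : ∀ i, 0 < ∑ j, D i j) (xs : ℝ → ι → ℝ)
    (hxs : ∀ᶠ θ in atTop, ∀ i, θ * exp (μ i + xs θ i) + (D *ᵥ xs θ) i = 0) (i : ι) :
    (fun θ => xs θ i + log θ - log (log θ) + μ i - log (∑ j, D i j)) =O[atTop]
        (fun θ => log (log θ) / log θ) ∧
      Tendsto (fun θ => xs θ i + log θ - log (log θ) + μ i - log (∑ j, D i j)) atTop (nhds 0) := by
  have hO : (fun θ => xs θ i + log θ - log (log θ) + μ i - log (∑ j, D i j)) =O[atTop]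
      fun θ => log (log θ) / log θ := by
    refine (isBigO_pi.1 (isBigO_sub_leadingOrder hD ha (hxs.mono fun _ => funext)) i).congr_left
      fun θ => ?_
    simp only [Pi.sub_apply, leadingOrder]
    ring
  exact ⟨hO, hO.trans_tendsto isLittleO_log_comp_log_log_atTop.tendsto_div_nhds_zero⟩

/-- If every row sum `a_i = ∑ j, D i j` of `D = Σ⁻¹` is strictly
positive, then for each `i` the remainder
`r_i(θ) = x*_i(θ) + log θ − log log θ + μ_i − log a_i` is
`O(log log θ / log θ)` as `θ → ∞`; in particular
`x*_i(θ) = −log θ + log log θ − μ_i + log a_i + o(1)`. -/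
theorem minimiser_asymptotics_positive_row_sums
    (n : ℕ) (hn : 1 ≤ n) (μ : Fin n → ℝ) (Sig : Matrix (Fin n) (Fin n) ℝ)
    (hSig : Sig.PosDef)
    (D : Matrix (Fin n) (Fin n) ℝ) (hD : D = Sig⁻¹)
    (ha : ∀ i, 0 < ∑ j, D i j)
    (xs : ℝ → Fin n → ℝ)
    (hxs : ∀ θ > (0 : ℝ), ∀ i, θ * Real.exp (μ i + xs θ i) + D.mulVec (xs θ) i = 0) :
    ∀ i,
      (fun θ : ℝ => xs θ i + Real.log θ - Real.log (Real.log θ) + μ i -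
          Real.log (∑ j, D i j)) =O[atTop]
        (fun θ : ℝ => Real.log (Real.log θ) / Real.log θ) ∧
      Tendsto
        (fun θ : ℝ => xs θ i + Real.log θ - Real.log (Real.log θ) + μ i -
          Real.log (∑ j, D i j)) atTop (nhds 0) := by
  have hD' : D.PosSemidef := hD ▸ hSig.inv.posSemidef
  exact minimiser_asymptotics_positive_row_sums_general μ D hD'.dotProduct_mulVec_nonneg ha xs
    ((eventually_gt_atTop 0).mono hxs)
end

section
/- Let {1,…,n} = P ⊔ N be a partition with N nonempty, and suppose that for every i ∈ N one has θ e^{μ_i + x*_i(θ)} → 0 as θ → ∞. Then every component of the vector x*_N(θ) + (D_{N,N})^{-1} D_{N,P} x*_P(θ) tends to 0 as θ → ∞, where x*_N, x*_P denote the subvectors of x*(θ) indexed by N and P, and D_{N,N}, D_{N,P} are the corresponding submatrices of D (the principal submatrix D_{N,N} of the positive definite matrix D being invertible). -/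
open Real Matrix Filter

/-!
Restricted to the rows in `N`, the stationarity equation reads
`D_{N,N} x_N + D_{N,P} x_P = -θ e^{μ_N + x_N}`. Multiplying by `D_{N,N}⁻¹` turns the left-hand side
into the vector of interest, and the right-hand side into the image of a vector tending to `0` under
a fixed linear map.
-/

theorem submatrix_mulVec_add_submatrix_mulVec {κ m ι R : Type*} [Fintype ι]
    [NonUnitalNonAssocSemiring R] {s t : Finset ι} (hst : IsCompl s t) (A : Matrix m ι R)
    (r : κ → m) (x : ι → R) :
    A.submatrix r ((↑) : s → ι) *ᵥ (fun j ↦ x j) +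
      A.submatrix r ((↑) : t → ι) *ᵥ (fun j ↦ x j) = (A *ᵥ x) ∘ r := by
  ext k
  calc ∑ j : s, A (r k) j * x j + ∑ j : t, A (r k) j * x j
      = ∑ j ∈ s, A (r k) j * x j + ∑ j ∈ t, A (r k) j * x j :=
        congrArg₂ (· + ·) (Finset.sum_coe_sort s fun j ↦ A (r k) j * x j)
          (Finset.sum_coe_sort t fun j ↦ A (r k) j * x j)
    _ = ∑ j, A (r k) j * x j := hst.sum_add_sum _

theorem inv_mulVec_mulVec_add_mulVec {m p R : Type*} [Fintype m] [DecidableEq m] [Fintype p]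
    [CommRing R] {A : Matrix m m R} (hA : IsUnit A) (B : Matrix m p R) (u : m → R) (v : p → R) :
    A⁻¹ *ᵥ (A *ᵥ u + B *ᵥ v) = u + (A⁻¹ * B) *ᵥ v := by
  rw [mulVec_add, mulVec_mulVec, mulVec_mulVec,
    nonsing_inv_mul A ((isUnit_iff_isUnit_det A).1 hA), one_mulVec]

theorem tendsto_const_mulVec {m p R α : Type*} [Fintype p] [NonUnitalNonAssocSemiring R]
    [TopologicalSpace R] [ContinuousAdd R] [ContinuousMul R] (A : Matrix m p R)
    {l : Filter α} {v : α → p → R} {w : p → R} (hv : Tendsto v l (nhds w)) :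
    Tendsto (fun a ↦ A *ᵥ v a) l (nhds (A *ᵥ w)) :=
  ((continuous_const.matrix_mulVec continuous_id).tendsto w).comp hv

theorem minimiser_subvector_relation_general {ι R α : Type*} [Fintype ι] [DecidableEq ι]
    [CommRing R] [TopologicalSpace R] [IsTopologicalRing R] {l : Filter α} {D : Matrix ι ι R}
    {P N : Finset ι} (hPN : IsCompl P N)
    (hD : IsUnit (D.submatrix (↑) (↑) : Matrix N N R)) {x g : α → ι → R}
    (hx : ∀ᶠ a in l, ∀ i ∈ N, g a i + (D *ᵥ x a) i = 0)
    (hg : ∀ i ∈ N, Tendsto (fun a ↦ g a i) l (nhds 0)) (i : N) :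
    Tendsto
      (fun a ↦ x a i + (((D.submatrix (↑) (↑) : Matrix N N R)⁻¹ *
        (D.submatrix (↑) (↑) : Matrix N P R)) *ᵥ fun j ↦ x a j) i)
      l (nhds 0) := by
  set DNN : Matrix N N R := D.submatrix (↑) (↑)
  set DNP : Matrix N P R := D.submatrix (↑) (↑)
  have hneg : Tendsto (fun a (k : N) ↦ -g a k) l (nhds 0) :=
    tendsto_pi_nhds.2 fun k ↦ by simpa only [neg_zero, Pi.zero_apply] using (hg k k.2).neg
  have hlim : Tendsto (fun a ↦ DNN⁻¹ *ᵥ fun k : N ↦ -g a k) l (nhds 0) := by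
    simpa only [mulVec_zero] using tendsto_const_mulVec DNN⁻¹ hneg
  refine (tendsto_pi_nhds.1 hlim i).congr' ?_
  filter_upwards [hx] with a ha
  have hrows : DNN *ᵥ (fun k : N ↦ x a k) + DNP *ᵥ (fun j : P ↦ x a j) = fun k : N ↦ -g a k := by
    rw [submatrix_mulVec_add_submatrix_mulVec hPN.symm D _ (x a)]
    exact funext fun k ↦ eq_neg_of_add_eq_zero_right (ha k k.2)
  rw [← hrows, inv_mulVec_mulVec_add_mulVec hD, Pi.add_apply]

/-- If `{1,…,n} = P ⊔ N` with `N` nonempty and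
`θ e^{μ_i + x*_i(θ)} → 0` for every `i ∈ N`, then every component of
`x*_N(θ) + (D_{N,N})⁻¹ D_{N,P} x*_P(θ)` tends to 0 as `θ → ∞`. -/
theorem minimiser_subvector_relation
    (n : ℕ) (hn : 1 ≤ n) (μ : Fin n → ℝ) (Sig : Matrix (Fin n) (Fin n) ℝ)
    (hSig : Sig.PosDef)
    (D : Matrix (Fin n) (Fin n) ℝ) (hD : D = Sig⁻¹)
    (P N : Finset (Fin n)) (hdisj : Disjoint P N) (hunion : P ∪ N = Finset.univ)
    (hNne : N.Nonempty)
    (xs : ℝ → Fin n → ℝ)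
    (hxs : ∀ θ > (0 : ℝ), ∀ i, θ * Real.exp (μ i + xs θ i) + D.mulVec (xs θ) i = 0)
    (htend : ∀ i ∈ N,
      Tendsto (fun θ : ℝ => θ * Real.exp (μ i + xs θ i)) atTop (nhds 0)) :
    let DNN : Matrix N N ℝ := Matrix.of fun i j : N => D i.1 j.1
    let DNP : Matrix N P ℝ := Matrix.of fun (i : N) (j : P) => D i.1 j.1
    ∀ i : N,
      Tendsto
        (fun θ : ℝ =>
          xs θ i.1 + (DNN⁻¹ * DNP).mulVec (fun j : P => xs θ j.1) i)
        atTop (nhds 0) := by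
  intro DNN _
  have hDNN : IsUnit DNN := ((hD ▸ hSig.inv : D.PosDef).submatrix Subtype.val_injective).isUnit
  exact minimiser_subvector_relation_general ⟨hdisj, codisjoint_iff.2 hunion⟩ hDNN
    ((eventually_gt_atTop 0).mono fun θ hθ i _ ↦ hxs θ hθ i) htend
end

section
/- Let D be a symmetric positive definite n×n real matrix, and let {1,…,n} = P ⊔ Q be a partition with P nonempty. Suppose b ∈ ℝ^n satisfies b_i = 1 for all i ∈ P, (Db)_i = 0 for all i ∈ Q, and (Db)_i > 0 for all i ∈ P. Then the Schur complement D̄ = D_{P,P} − D_{P,Q} (D_{Q,Q})^{-1} D_{Q,P} satisfies D̄·1 = (Db)_P, where 1 is the all-ones vector indexed by P; in particular every row sum of D̄ is strictly positive. -/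
open Matrix

/-! Split `D b` along `P ⊔ Q`. Vanishing of `D b` on `Q` says `D_{Q,P} b_P = -D_{Q,Q} b_Q`.
Substituting this into `D̄ b_P` cancels `D_{Q,Q}⁻¹` and leaves `D_{P,P} b_P + D_{P,Q} b_Q`, which is
`(D b)_P`; and `b_P` is the all-ones vector. -/

section Blocks

variable {l m n ι R : Type*}

theorem sub_mul_inv_mul_mulVec_eq_add [Fintype l] [Fintype n] [DecidableEq n] [CommRing R]
    (A : Matrix m l R) (B : Matrix m n R) (C : Matrix n l R) {E : Matrix n n R} (hE : IsUnit E)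
    {x : l → R} {y : n → R} (hxy : C *ᵥ x + E *ᵥ y = 0) :
    (A - B * E⁻¹ * C) *ᵥ x = A *ᵥ x + B *ᵥ y := by
  have hCx : C *ᵥ x = -(E *ᵥ y) := eq_neg_of_add_eq_zero_left hxy
  have hdet : IsUnit E.det := (isUnit_iff_isUnit_det E).1 hE
  calc (A - B * E⁻¹ * C) *ᵥ x
      = A *ᵥ x - (B * E⁻¹) *ᵥ (C *ᵥ x) := by rw [sub_mulVec, mulVec_mulVec]
    _ = A *ᵥ x + (B * E⁻¹ * E) *ᵥ y := by
      rw [hCx, mulVec_neg, sub_neg_eq_add, mulVec_mulVec]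
    _ = A *ᵥ x + B *ᵥ y := by rw [nonsing_inv_mul_cancel_right E B hdet]

theorem mulVec_comp_eq_add_of_isCompl [Fintype ι] [NonUnitalNonAssocSemiring R]
    {P Q : Finset ι} (hPQ : IsCompl P Q) (M : Matrix m ι R) (r : l → m) (v : ι → R) :
    (M *ᵥ v) ∘ r = M.submatrix r ((↑) : P → ι) *ᵥ (v ∘ (↑)) +
      M.submatrix r ((↑) : Q → ι) *ᵥ (v ∘ (↑)) := by
  classical
  funext i
  calc (M *ᵥ v) (r i) = ∑ j ∈ P, M (r i) j * v j + ∑ j ∈ Q, M (r i) j * v j :=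
        (hPQ.sum_add_sum _).symm
    _ = ∑ j : P, M (r i) j * v j + ∑ j : Q, M (r i) j * v j := by
      rw [← Finset.sum_coe_sort P, ← Finset.sum_coe_sort Q]

end Blocks

section SchurComplement

variable {ι R : Type*} [DecidableEq ι] [CommRing R]

/-- The Schur complement `D_{P,P} - D_{P,Q} D_{Q,Q}⁻¹ D_{Q,P}` of the block `D_{Q,Q}`, for index
sets `P` and `Q` given as finsets. The inverse is Mathlib's, so it is `0` when `D_{Q,Q}` is not
invertible. -/
noncomputable def schurComplement (D : Matrix ι ι R) (P Q : Finset ι) : Matrix P P R :=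
  D.submatrix ((↑) : P → ι) ((↑) : P → ι) -
    D.submatrix ((↑) : P → ι) ((↑) : Q → ι) * (D.submatrix ((↑) : Q → ι) ((↑) : Q → ι))⁻¹ *
      D.submatrix ((↑) : Q → ι) ((↑) : P → ι)

variable [Fintype ι] {D : Matrix ι ι R} {P Q : Finset ι} {b : ι → R}

theorem schurComplement_mulVec_comp (hPQ : IsCompl P Q)
    (hDQQ : IsUnit (D.submatrix ((↑) : Q → ι) ((↑) : Q → ι))) (hDbQ : ∀ i ∈ Q, (D *ᵥ b) i = 0) :
    schurComplement D P Q *ᵥ (b ∘ (↑)) = (D *ᵥ b) ∘ (↑) := by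
  have hQrows : (D *ᵥ b) ∘ ((↑) : Q → ι) = 0 := funext fun i => hDbQ i i.2
  rw [mulVec_comp_eq_add_of_isCompl hPQ] at hQrows ⊢
  exact sub_mul_inv_mul_mulVec_eq_add _ _ _ hDQQ hQrows

theorem schur_complement_row_sums_positive_general [Preorder R] (hPQ : IsCompl P Q)
    (hDQQ : IsUnit (D.submatrix ((↑) : Q → ι) ((↑) : Q → ι)))
    (hbP : ∀ i ∈ P, b i = 1) (hDbQ : ∀ i ∈ Q, (D *ᵥ b) i = 0) (hDbP : ∀ i ∈ P, 0 < (D *ᵥ b) i) :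
    (∀ i : P, (schurComplement D P Q *ᵥ 1) i = (D *ᵥ b) i) ∧
      ∀ i : P, 0 < ∑ j : P, schurComplement D P Q i j := by
  have hb : b ∘ ((↑) : P → ι) = 1 := funext fun i => hbP i i.2
  have hrow : ∀ i : P, (schurComplement D P Q *ᵥ 1) i = (D *ᵥ b) i :=
    congrFun (hb ▸ schurComplement_mulVec_comp hPQ hDQQ hDbQ)
  refine ⟨hrow, fun i => ?_⟩
  calc 0 < (D *ᵥ b) i := hDbP i i.2
    _ = (schurComplement D P Q *ᵥ 1) i := (hrow i).symm
    _ = ∑ j : P, schurComplement D P Q i j := by simp [mulVec, dotProduct]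

end SchurComplement

/-- Let `D` be symmetric positive definite, `{1,…,n} = P ⊔ Q` with
`P` nonempty, and `b` with `b_i = 1` on `P`, `(Db)_i = 0` on `Q`, `(Db)_i > 0`
on `P`. Then the Schur complement `D̄ = D_{P,P} − D_{P,Q} D_{Q,Q}⁻¹ D_{Q,P}`
satisfies `D̄·1 = (Db)_P`; in particular every row sum of `D̄` is strictly
positive. -/
theorem schur_complement_row_sums_positive
    (n : ℕ) (hn : 1 ≤ n)
    (D : Matrix (Fin n) (Fin n) ℝ) (hD : D.PosDef)
    (P Q : Finset (Fin n)) (hdisj : Disjoint P Q) (hunion : P ∪ Q = Finset.univ)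
    (hPne : P.Nonempty)
    (b : Fin n → ℝ)
    (hbP : ∀ i ∈ P, b i = 1)
    (hDbQ : ∀ i ∈ Q, D.mulVec b i = 0)
    (hDbP : ∀ i ∈ P, 0 < D.mulVec b i) :
    let DPP : Matrix P P ℝ := Matrix.of fun i j : P => D i.1 j.1
    let DPQ : Matrix P Q ℝ := Matrix.of fun (i : P) (j : Q) => D i.1 j.1
    let DQQ : Matrix Q Q ℝ := Matrix.of fun i j : Q => D i.1 j.1
    let DQP : Matrix Q P ℝ := Matrix.of fun (i : Q) (j : P) => D i.1 j.1
    let Dbar : Matrix P P ℝ := DPP - DPQ * DQQ⁻¹ * DQP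
    (∀ i : P, Dbar.mulVec 1 i = D.mulVec b i.1) ∧
    (∀ i : P, 0 < ∑ j : P, Dbar i j) := by
  exact schur_complement_row_sums_positive_general ⟨hdisj, codisjoint_iff.2 hunion⟩
    (hD.submatrix Subtype.val_injective).isUnit hbP hDbQ hDbP
end

section
/- For each i ∈ {1,…,n} and each real ℓ > 2, θ e^{μ_i + x*_i(θ)} · (θ e^{μ_i + x*_i(θ)} + D_{ii})^{-ℓ/2} → 0 as θ → ∞. -/
/-!
Put `λᵢ = θ exp (μᵢ + x*ᵢ)` and `T = log θ`. As `x* = -Σ λ`, stationarity reads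
`log λᵢ + (Σ λ)ᵢ = T + μᵢ`. The function `y ↦ y (y + Dᵢᵢ) ^ (-ℓ / 2)` tends to `0` both at `0` and
at `∞`, so it is enough that each `λᵢ` tends to `0` or to `∞`.

The vector `λ / T` is bounded, and dividing the equations by `T` shows that its limit points solve
the linear complementarity problem `0 ≤ p ⟂ Σ p - 1 ≥ 0`, which has at most one solution `p`. Hence
`λ / T → p`; if `pᵢ > 0` then `λᵢ → ∞`, and if `(Σ p)ᵢ > 1` then `log λᵢ → -∞`. There remain the
indices with `pᵢ = 0` and `(Σ p)ᵢ = 1`. On the support of `p`, `log λᵢ = log T + O(1)`, so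
eliminating these coordinates by a Schur complement leaves the remaining ones with equations of the
same shape up to bounded errors, in which `T` is replaced by `log T`. As `p ≠ 0` there are fewer of
them, and one concludes by induction.
-/

open Real Matrix Filter

open Asymptotics Topology

section Prelim

variable {α ι κ : Type*} {l : Filter α}

lemma isBigO_mulVec_apply [Fintype κ] (K : Matrix ι κ ℝ) {f : α → κ → ℝ} {g : α → ℝ}
    (hf : ∀ j, (fun t => f t j) =O[l] g) (i : ι) : (fun t => (K *ᵥ f t) i) =O[l] g :=
  IsBigO.fun_sum fun j _ => (hf j).const_mul_left (K i j)

lemma mulVec_eq_sumElim_toBlocks {R m n : Type*} [NonUnitalNonAssocSemiring R] [Fintype m]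
    [Fintype n] (M : Matrix (m ⊕ n) (m ⊕ n) R) (w : m ⊕ n → R) :
    M *ᵥ w = (M.toBlocks₁₁ *ᵥ (w ∘ Sum.inl) + M.toBlocks₁₂ *ᵥ (w ∘ Sum.inr)) ⊕ᵥ
      (M.toBlocks₂₁ *ᵥ (w ∘ Sum.inl) + M.toBlocks₂₂ *ᵥ (w ∘ Sum.inr)) := by
  conv_lhs => rw [← M.fromBlocks_toBlocks, fromBlocks_mulVec]

theorem posDef_schurComplement₁₁ {K m n : Type*} [Field K] [PartialOrder K] [StarRing K]
    [Fintype m] [DecidableEq m] [Finite n] {M : Matrix (m ⊕ n) (m ⊕ n) K} (hM : M.PosDef) :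
    (M.toBlocks₂₂ - M.toBlocks₂₁ * M.toBlocks₁₁⁻¹ * M.toBlocks₁₂).PosDef := by
  have := Fintype.ofFinite n
  have hA : M.toBlocks₁₁.PosDef := hM.submatrix Sum.inl_injective
  have h₂₁ : M.toBlocks₂₁ = M.toBlocks₁₂ᴴ := by
    ext i j
    exact (hM.isHermitian.apply _ _).symm
  have := hA.isUnit.invertible
  rw [← M.fromBlocks_toBlocks, h₂₁] at hM
  rw [h₂₁]
  refine .of_dotProduct_mulVec_pos ((IsHermitian.fromBlocks₁₁ _ _ hA.1).1 hM.1) fun y hy => ?_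
  have hne : -((M.toBlocks₁₁⁻¹ * M.toBlocks₁₂) *ᵥ y) ⊕ᵥ y ≠ 0 :=
    fun h => hy (funext fun j => congrFun h (Sum.inr j))
  have hpos := hM.dotProduct_mulVec_pos hne
  rwa [dotProduct_mulVec, schur_complement_eq₁₁ _ _ _ _ hA.1, neg_add_cancel, dotProduct_zero,
    zero_add, ← dotProduct_mulVec] at hpos

lemma tendsto_mul_add_rpow_of_tendsto_zero {f : α → ℝ} {d : ℝ} (hd : d ≠ 0) (q : ℝ)
    (hf : Tendsto f l (𝓝 0)) : Tendsto (fun t => f t * (f t + d) ^ q) l (𝓝 0) := by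
  have hpow : Tendsto (fun t => (f t + d) ^ q) l (𝓝 ((0 + d) ^ q)) :=
    (hf.add_const d).rpow_const (.inl (by rwa [zero_add]))
  simpa only [zero_mul] using hf.mul hpow

lemma tendsto_mul_add_rpow_neg_of_tendsto_atTop {f : α → ℝ} (d : ℝ) {q : ℝ} (hq : 1 < q)
    (hf : Tendsto f l atTop) : Tendsto (fun t => f t * (f t + d) ^ (-q)) l (𝓝 0) := by
  have hfd : Tendsto (fun t => f t + d) l atTop := tendsto_atTop_add_const_right l d hf
  have hlim : Tendsto (fun t => (f t + d) ^ (-(q - 1)) - d * (f t + d) ^ (-q)) l (𝓝 0) := by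
    simpa only [mul_zero, sub_zero, Function.comp_apply] using
      ((tendsto_rpow_neg_atTop (sub_pos.2 hq)).comp hfd).sub
        (((tendsto_rpow_neg_atTop (zero_lt_one.trans hq)).comp hfd).const_mul d)
  refine hlim.congr' ?_
  filter_upwards [hfd.eventually_gt_atTop 0] with t ht
  rw [neg_sub, sub_eq_add_neg 1, rpow_add ht, rpow_one]
  ring

end Prelim

section Complementarity

variable {ι : Type*} [Fintype ι] {S : Matrix ι ι ℝ} {p q : ι → ℝ}

/-- `p` solves the linear complementarity problem `0 ≤ p ⟂ S p - 1 ≥ 0`. Its solution is the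
limit of `x / T` for the solutions `x` of `log xᵢ + (S x)ᵢ = T` as `T → ∞`. -/
structure IsLCPSolution (S : Matrix ι ι ℝ) (p : ι → ℝ) : Prop where
  nonneg : ∀ i, 0 ≤ p i
  one_le : ∀ i, 1 ≤ (S *ᵥ p) i
  complementary : ∀ i, p i ≠ 0 → (S *ᵥ p) i = 1

theorem IsLCPSolution.unique (hS : S.PosDef) (hp : IsLCPSolution S p) (hq : IsLCPSolution S q) :
    p = q := by
  by_contra hne
  have hpos := hS.dotProduct_mulVec_pos (sub_ne_zero.2 hne)
  refine hpos.not_ge (Finset.sum_nonpos fun i _ => ?_)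
  rw [mulVec_sub, Pi.star_apply, star_trivial, Pi.sub_apply, Pi.sub_apply]
  by_cases hpi : p i = 0 <;> by_cases hqi : q i = 0
  · simp [hpi, hqi]
  · rw [hpi, hq.complementary i hqi]
    nlinarith [hq.nonneg i, hp.one_le i]
  · rw [hqi, hp.complementary i hpi]
    nlinarith [hp.nonneg i, hq.one_le i]
  · simp [hp.complementary i hpi, hq.complementary i hqi]

lemma mulVec_restrict_support {κ : Type*} (K : Matrix κ ι ℝ) (p : ι → ℝ)
    [Fintype {i // p i ≠ 0}] (k : κ) :
    ((K.submatrix id Subtype.val) *ᵥ fun a : {i // p i ≠ 0} => p a) k = (K *ᵥ p) k :=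
  Fintype.sum_of_injective Subtype.val Subtype.val_injective _ _
    (fun i hi => by simp_all) fun _ => rfl

end Complementarity

section LogLinear

variable {α ι : Type*} [Fintype ι] {l l' : Filter α} {S : Matrix ι ι ℝ} {T : α → ℝ}
  {x : α → ι → ℝ} {p : ι → ℝ}

-- `(y - k v)ᵀ S (y - k v) ≥ 0` for `v = S⁻¹ 1` bounds `yᵀ S y` below, with no recourse to the
-- spectrum of `S`.
theorem mul_sum_le_of_log_add_mulVec_le (hS : S.PosDef) {v y : ι → ℝ} (hv : S *ᵥ v = 1) {k : ℝ}
    (hy : ∀ i, 0 < y i)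
    (hle : ∀ i, log (y i) + (S *ᵥ y) i ≤ k) :
    k * ∑ i, y i ≤ k ^ 2 * ∑ i, v i + Fintype.card ι := by
  have hquad : 0 ≤ (y - k • v) ⬝ᵥ (S *ᵥ (y - k • v)) := by
    simpa using hS.posSemidef.dotProduct_mulVec_nonneg (y - k • v)
  have hvy : v ⬝ᵥ (S *ᵥ y) = ∑ i, y i := by
    rw [dotProduct_mulVec, ← mulVec_transpose,
      show Sᵀ = S by simpa using hS.isHermitian.eq, hv, one_dotProduct]
  have hyy : y ⬝ᵥ (S *ᵥ y) ≤ k * ∑ i, y i + Fintype.card ι := by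
    have hterm : ∀ i, y i * (S *ᵥ y) i ≤ k * y i + 1 := fun i => by
      have := negMulLog_le_one_sub_self (hy i).le
      rw [negMulLog] at this
      nlinarith [mul_le_mul_of_nonneg_left (hle i) (hy i).le, hy i]
    calc y ⬝ᵥ (S *ᵥ y) ≤ ∑ i, (k * y i + 1) := Finset.sum_le_sum fun i _ => hterm i
      _ = k * ∑ i, y i + Fintype.card ι := by
        simp [Finset.sum_add_distrib, Finset.mul_sum]
  simp only [mulVec_sub, mulVec_smul, hv, sub_dotProduct, dotProduct_sub, smul_dotProduct,
    dotProduct_smul, smul_eq_mul, hvy, dotProduct_one, Pi.sub_apply, Pi.smul_apply,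
    Finset.sum_sub_distrib, ← Finset.mul_sum] at hquad
  nlinarith

/-- Along the filter `l`, the vectors `x t` are positive and solve the equations
`log xᵢ + (S x)ᵢ = T` up to bounded errors. The stationarity equations have this form with
`xᵢ = θ exp (μᵢ + x*ᵢ)`, `S = Σ` and `T = log θ`; the errors make the notion stable under the
elimination of variables. -/
structure IsLogLinearSolution (l : Filter α) (S : Matrix ι ι ℝ) (T : α → ℝ) (x : α → ι → ℝ) :
    Prop where
  pos : ∀ᶠ t in l, ∀ i, 0 < x t i
  isBigO : ∀ i, (fun t => log (x t i) + (S *ᵥ x t) i - T t) =O[l] (fun _ => (1 : ℝ))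

namespace IsLogLinearSolution

lemma mono (h : IsLogLinearSolution l S T x) (hl : l' ≤ l) : IsLogLinearSolution l' S T x :=
  ⟨h.pos.filter_mono hl, fun i => (h.isBigO i).mono hl⟩

theorem submatrix {κ : Type*} [Fintype κ] (h : IsLogLinearSolution l S T x) {e : κ → ι}
    (he : e.Injective)
    (hbdd : ∀ i ∉ Set.range e, (fun t => x t i) =O[l] (fun _ => (1 : ℝ))) :
    IsLogLinearSolution l (S.submatrix e e) T (fun t k => x t (e k)) := by
  classical
  refine ⟨h.pos.mono fun t ht k => ht (e k), fun k => ?_⟩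
  have hrest : (fun t => ∑ i ∈ (Finset.univ.image e)ᶜ, S (e k) i * x t i)
      =O[l] (fun _ => (1 : ℝ)) :=
    IsBigO.fun_sum fun i hi => (hbdd i (by simpa using hi)).const_mul_left _
  refine ((h.isBigO (e k)).sub hrest).congr_left fun t => ?_
  have hsplit : (S *ᵥ x t) (e k) = (S.submatrix e e *ᵥ fun k => x t (e k)) k
      + ∑ i ∈ (Finset.univ.image e)ᶜ, S (e k) i * x t i := by
    simp only [mulVec, dotProduct, submatrix_apply]
    rw [← Finset.sum_add_sum_compl (Finset.univ.image e), Finset.sum_image he.injOn]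
  rw [hsplit]
  ring

-- The matrix `K = M₂₁ M₁₁⁻¹` satisfies `K 1 = M₂₁ v = 1`. Subtracting `K` times the first block of
-- equations from the second therefore cancels `T` and leaves `K (log x₁) = s + O(1)`.
theorem schurComplement {m n : Type*} [Fintype m] [DecidableEq m] [Fintype n]
    {M : Matrix (m ⊕ n) (m ⊕ n) ℝ} {s : α → ℝ} {x : α → m ⊕ n → ℝ} {v : m → ℝ}
    (h : IsLogLinearSolution l M T x) (hM : IsUnit M.toBlocks₁₁)
    (hv₁ : M.toBlocks₁₁ *ᵥ v = 1) (hv₂ : M.toBlocks₂₁ *ᵥ v = 1)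
    (hx : ∀ a, (fun t => log (x t (Sum.inl a)) - s t) =O[l] (fun _ => (1 : ℝ))) :
    IsLogLinearSolution l (M.toBlocks₂₂ - M.toBlocks₂₁ * M.toBlocks₁₁⁻¹ * M.toBlocks₁₂) s
      (fun t b => x t (Sum.inr b)) := by
  refine ⟨h.pos.mono fun t ht b => ht (Sum.inr b), fun b => ?_⟩
  set K := M.toBlocks₂₁ * M.toBlocks₁₁⁻¹ with hK
  have hinv : M.toBlocks₁₁⁻¹ * M.toBlocks₁₁ = 1 :=
    nonsing_inv_mul _ ((isUnit_iff_isUnit_det _).1 hM)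
  have hKM : K * M.toBlocks₁₁ = M.toBlocks₂₁ := by
    rw [hK, Matrix.mul_assoc, hinv, Matrix.mul_one]
  have hK1 : K *ᵥ 1 = 1 := by rw [← hv₁, mulVec_mulVec, hKM, hv₂]
  have hcomb := ((h.isBigO (Sum.inr b)).sub
    (isBigO_mulVec_apply K (fun a => h.isBigO (Sum.inl a)) b)).add (isBigO_mulVec_apply K hx b)
  refine hcomb.congr_left fun t => ?_
  have herr : (fun a => log (x t (Sum.inl a)) + (M *ᵥ x t) (Sum.inl a) - T t) =
      (fun a => log (x t (Sum.inl a))) + M.toBlocks₁₁ *ᵥ (x t ∘ Sum.inl)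
        + M.toBlocks₁₂ *ᵥ (x t ∘ Sum.inr) - T t • (1 : m → ℝ) := by
    ext a
    simp [mulVec_eq_sumElim_toBlocks M (x t), add_assoc]
  have hlog : (fun a => log (x t (Sum.inl a)) - s t) =
      (fun a => log (x t (Sum.inl a))) - s t • (1 : m → ℝ) := by
    ext a
    simp
  have hinr : (fun b => x t (Sum.inr b)) = x t ∘ Sum.inr := rfl
  rw [herr, hlog, hinr, mulVec_eq_sumElim_toBlocks M (x t)]
  simp only [mulVec_sub, mulVec_add, mulVec_smul, hK1, mulVec_mulVec, hKM, sub_mulVec,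
    Pi.sub_apply, Pi.add_apply, Pi.smul_apply, Pi.one_apply, smul_eq_mul, mul_one, Sum.elim_inr]
  ring

theorem isBigO_of_tendsto_atTop (hS : S.PosDef) (h : IsLogLinearSolution l S T x)
    (hT : Tendsto T l atTop) : x =O[l] T := by
  classical
  obtain ⟨v, hv⟩ : ∃ v, S *ᵥ v = 1 := mulVec_surjective_iff_isUnit.2 hS.isUnit 1
  obtain ⟨C, hC, hres⟩ := (isBigO_pi.2 h.isBigO).exists_nonneg
  have hTC : (fun t => T t + C) =O[l] T :=
    (isBigO_refl T l).add (isLittleO_const_left.2 (.inr (tendsto_norm_atTop_atTop.comp hT))).isBigO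
  refine IsBigO.trans (.of_bound (∑ i, v i + Fintype.card ι) ?_) hTC
  filter_upwards [h.pos, hres.bound, hT.eventually_ge_atTop 1] with t hx hr ht
  have hle : ∀ i, log (x t i) + (S *ᵥ x t) i ≤ T t + C := fun i => by
    have := (le_abs_self _).trans ((norm_le_pi_norm _ i).trans hr)
    rw [norm_one, mul_one] at this
    linarith
  have hsum := mul_sum_le_of_log_add_mulVec_le hS hv hx hle
  have hk : 1 ≤ T t + C := by linarith
  calc ‖x t‖ ≤ ∑ i, x t i := (pi_norm_le_iff_of_nonneg (Finset.sum_nonneg fun i _ => (hx i).le)).2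
        fun i => by
          rw [norm_of_nonneg (hx i).le]
          exact Finset.single_le_sum (fun j _ => (hx j).le) (Finset.mem_univ i)
    _ ≤ (∑ i, v i + Fintype.card ι) * (T t + C) := by
      have hcard : (Fintype.card ι : ℝ) ≤ (T t + C) ^ 2 * Fintype.card ι :=
        le_mul_of_one_le_left (Nat.cast_nonneg _) (one_le_pow₀ hk)
      refine le_of_mul_le_mul_left ?_ (zero_lt_one.trans_le hk)
      linarith
    _ = (∑ i, v i + Fintype.card ι) * ‖T t + C‖ := by
      rw [norm_of_nonneg (zero_le_one.trans hk)]

theorem tendsto_log_div (h : IsLogLinearSolution l S T x) (hT : Tendsto T l atTop)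
    (hp : Tendsto (fun t => (T t)⁻¹ • x t) l (𝓝 p)) (i : ι) :
    Tendsto (fun t => log (x t i) / T t) l (𝓝 (1 - (S *ᵥ p) i)) := by
  have hres : Tendsto (fun t => (log (x t i) + (S *ᵥ x t) i - T t) / T t) l (𝓝 0) :=
    ((h.isBigO i).trans_isLittleO (isLittleO_const_left.2
      (.inr (tendsto_norm_atTop_atTop.comp hT)))).tendsto_div_nhds_zero
  have hmul : Tendsto (fun t => (S *ᵥ ((T t)⁻¹ • x t)) i) l (𝓝 ((S *ᵥ p) i)) :=
    ((continuous_apply i).comp (continuous_const.matrix_mulVec continuous_id)).tendsto p |>.comp hp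
  have hlim := (hres.add_const 1).sub hmul
  rw [zero_add] at hlim
  refine hlim.congr' ?_
  filter_upwards [hT.eventually_gt_atTop 0] with t ht
  rw [mulVec_smul, Pi.smul_apply, smul_eq_mul]
  field_simp
  ring

lemma tendsto_log_sub_log (h : IsLogLinearSolution l S T x) (hT : Tendsto T l atTop)
    (hp : Tendsto (fun t => (T t)⁻¹ • x t) l (𝓝 p)) {i : ι} (hi : p i ≠ 0) :
    Tendsto (fun t => log (x t i) - log (T t)) l (𝓝 (log (p i))) := by
  refine ((tendsto_pi_nhds.1 hp i).log hi).congr' ?_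
  filter_upwards [h.pos, hT.eventually_gt_atTop 0] with t hx ht
  rw [Pi.smul_apply, smul_eq_mul, inv_mul_eq_div, log_div (hx i).ne' ht.ne']

theorem isLCPSolution [l.NeBot] (h : IsLogLinearSolution l S T x) (hT : Tendsto T l atTop)
    (hp : Tendsto (fun t => (T t)⁻¹ • x t) l (𝓝 p)) : IsLCPSolution S p := by
  have hTinv : Tendsto (fun t => (T t)⁻¹) l (𝓝 0) := tendsto_inv_atTop_zero.comp hT
  have hlogT : Tendsto (fun t => log (T t) / T t) l (𝓝 0) :=
    isLittleO_log_id_atTop.tendsto_div_nhds_zero.comp hT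
  refine ⟨fun i => ?_, fun i => ?_, fun i hi => ?_⟩
  · refine ge_of_tendsto (tendsto_pi_nhds.1 hp i) ?_
    filter_upwards [h.pos, hT.eventually_gt_atTop 0] with t hx ht
    exact mul_nonneg (inv_pos.2 ht).le (hx i).le
  · have hbound : Tendsto (fun t => log (p i + 1) * (T t)⁻¹ + log (T t) / T t) l (𝓝 0) := by
      simpa only [mul_zero, add_zero] using (hTinv.const_mul _).add hlogT
    refine sub_nonpos.1 (le_of_tendsto_of_tendsto (h.tendsto_log_div hT hp i) hbound ?_)
    filter_upwards [h.pos, hT.eventually_gt_atTop 0,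
      (tendsto_pi_nhds.1 hp i).eventually_lt_const (lt_add_one (p i))] with t hx ht hlt
    rw [Pi.smul_apply, smul_eq_mul, inv_mul_lt_iff₀ ht] at hlt
    have hp1 : 0 < p i + 1 := pos_of_mul_pos_right ((hx i).trans hlt) ht.le
    rw [← div_eq_mul_inv, ← add_div, add_comm, ← log_mul ht.ne' hp1.ne']
    exact div_le_div_of_nonneg_right (log_le_log (hx i) hlt.le) ht.le
  · have hlim : Tendsto (fun t => log (x t i) / T t) l (𝓝 0) := by
      have := ((h.tendsto_log_sub_log hT hp hi).mul hTinv).add hlogT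
      rw [mul_zero, add_zero] at this
      exact this.congr fun t => by ring
    exact (sub_eq_zero.1 (tendsto_nhds_unique (h.tendsto_log_div hT hp i) hlim)).symm

theorem exists_tendsto_inv_smul [l.NeBot] (hS : S.PosDef) (h : IsLogLinearSolution l S T x)
    (hT : Tendsto T l atTop) : ∃ p, Tendsto (fun t => (T t)⁻¹ • x t) l (𝓝 p) := by
  obtain ⟨C, hC⟩ := (h.isBigO_of_tendsto_atTop hS hT).bound
  have hbdd : ∀ᶠ t in l, (T t)⁻¹ • x t ∈ Metric.closedBall (0 : ι → ℝ) C := by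
    filter_upwards [hC, hT.eventually_gt_atTop 0] with t ht hTt
    rwa [mem_closedBall_zero_iff, norm_smul, norm_inv, inv_mul_le_iff₀ (norm_pos_iff.2 hTt.ne'),
      mul_comm]
  have hlim : ∀ U : Ultrafilter α, ↑U ≤ l →
      ∃ p, IsLCPSolution S p ∧ Tendsto (fun t => (T t)⁻¹ • x t) U (𝓝 p) := fun U hU => by
    obtain ⟨p, -, hp⟩ := (isCompact_closedBall (0 : ι → ℝ) C).ultrafilter_le_nhds
      (U.map fun t => (T t)⁻¹ • x t) (le_principal_iff.2 (hU hbdd))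
    exact ⟨p, (h.mono hU).isLCPSolution (hT.mono_left hU) hp, hp⟩
  obtain ⟨p, hp, -⟩ := hlim (Ultrafilter.of l) (Ultrafilter.of_le l)
  refine ⟨p, (tendsto_iff_ultrafilter _ _ _).2 fun U hU => ?_⟩
  obtain ⟨q, hq, hlimq⟩ := hlim U hU
  rwa [hp.unique hS hq]

lemma tendsto_atTop_of_ne_zero [l.NeBot] (h : IsLogLinearSolution l S T x) (hT : Tendsto T l atTop)
    (hp : Tendsto (fun t => (T t)⁻¹ • x t) l (𝓝 p)) {i : ι} (hi : p i ≠ 0) :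
    Tendsto (fun t => x t i) l atTop := by
  have hpos : 0 < p i := ((h.isLCPSolution hT hp).nonneg i).lt_of_ne' hi
  refine (hT.atTop_mul_pos hpos (tendsto_pi_nhds.1 hp i)).congr' ?_
  filter_upwards [hT.eventually_gt_atTop 0] with t ht
  exact mul_inv_cancel_left₀ ht.ne' _

lemma tendsto_zero_of_one_lt (h : IsLogLinearSolution l S T x) (hT : Tendsto T l atTop)
    (hp : Tendsto (fun t => (T t)⁻¹ • x t) l (𝓝 p)) {i : ι} (hi : 1 < (S *ᵥ p) i) :
    Tendsto (fun t => x t i) l (𝓝 0) := by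
  have hlog : Tendsto (fun t => log (x t i)) l atBot := by
    refine (hT.atTop_mul_neg (sub_neg.2 hi) (h.tendsto_log_div hT hp i)).congr' ?_
    filter_upwards [hT.eventually_gt_atTop 0] with t ht
    exact mul_div_cancel₀ _ ht.ne'
  refine (tendsto_exp_atBot.comp hlog).congr' ?_
  filter_upwards [h.pos] with t hx
  exact exp_log (hx i)

theorem exists_degenerate [l.NeBot] (hS : S.PosDef) (h : IsLogLinearSolution l S T x)
    (hT : Tendsto T l atTop) (hp : Tendsto (fun t => (T t)⁻¹ • x t) l (𝓝 p)) :
    ∃ R : Matrix {i // p i = 0 ∧ (S *ᵥ p) i = 1} {i // p i = 0 ∧ (S *ᵥ p) i = 1} ℝ,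
      R.PosDef ∧ IsLogLinearSolution l R (fun t => log (T t)) fun t i => x t i := by
  classical
  have hlcp := h.isLCPSolution hT hp
  let e : {i // p i ≠ 0} ⊕ {i // p i = 0 ∧ (S *ᵥ p) i = 1} → ι := Sum.elim (↑) (↑)
  have he : e.Injective := Subtype.val_injective.sumElim Subtype.val_injective
    fun a b hab => a.2 (hab ▸ b.2.1)
  have hM : (S.submatrix e e).PosDef := hS.submatrix he
  have hunit : IsUnit (S.submatrix e e).toBlocks₁₁ := (hM.submatrix Sum.inl_injective).isUnit
  have hsub : IsLogLinearSolution l (S.submatrix e e) T (fun t k => x t (e k)) := by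
    refine h.submatrix he fun i hi => ?_
    have hi0 : p i = 0 := by
      by_contra h0
      exact hi ⟨.inl ⟨i, h0⟩, rfl⟩
    have hi1 : (S *ᵥ p) i ≠ 1 := fun h1 => hi ⟨.inr ⟨i, hi0, h1⟩, rfl⟩
    exact (h.tendsto_zero_of_one_lt hT hp ((hlcp.one_le i).lt_of_ne' hi1)).isBigO_one ℝ
  have h₁₁ : (S.submatrix e e).toBlocks₁₁ *ᵥ (fun a : {i // p i ≠ 0} => p a) = 1 :=
    funext fun a => (mulVec_restrict_support S p a.1).trans (hlcp.complementary a a.2)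
  have h₂₁ : (S.submatrix e e).toBlocks₂₁ *ᵥ (fun a : {i // p i ≠ 0} => p a) = 1 :=
    funext fun b => (mulVec_restrict_support S p b.1).trans b.2.2
  have hlog : ∀ a : {i // p i ≠ 0},
      (fun t => log (x t (e (.inl a))) - log (T t)) =O[l] (fun _ => (1 : ℝ)) :=
    fun a => (h.tendsto_log_sub_log hT hp a.2).isBigO_one ℝ
  exact ⟨_, posDef_schurComplement₁₁ hM, hsub.schurComplement hunit h₁₁ h₂₁ hlog⟩

theorem tendsto_zero_or_atTop {ι : Type*} [Fintype ι] {S : Matrix ι ι ℝ} {T : α → ℝ}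
    {x : α → ι → ℝ} [l.NeBot] (hS : S.PosDef) (h : IsLogLinearSolution l S T x)
    (hT : Tendsto T l atTop) (i : ι) :
    Tendsto (fun t => x t i) l (𝓝 0) ∨ Tendsto (fun t => x t i) l atTop := by
  classical
  obtain ⟨p, hp⟩ := h.exists_tendsto_inv_smul hS hT
  by_cases hi0 : p i = 0
  swap
  · exact .inr (h.tendsto_atTop_of_ne_zero hT hp hi0)
  by_cases hi1 : (S *ᵥ p) i = 1
  swap
  · exact .inl (h.tendsto_zero_of_one_lt hT hp
      (((h.isLCPSolution hT hp).one_le i).lt_of_ne' hi1))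
  obtain ⟨a, ha⟩ : ∃ a, p a ≠ 0 := by
    by_contra! hp0
    simp [show p = 0 from funext hp0] at hi1
  obtain ⟨R, hR, hxR⟩ := h.exists_degenerate hS hT hp
  have hcard : Fintype.card {i // p i = 0 ∧ (S *ᵥ p) i = 1} < Fintype.card ι :=
    Fintype.card_subtype_lt fun ha' => ha ha'.1
  exact hxR.tendsto_zero_or_atTop hR (tendsto_log_atTop.comp hT) ⟨i, hi0, hi1⟩
termination_by Fintype.card ι
decreasing_by exact hcard

end IsLogLinearSolution

end LogLinear

lemma isLogLinearSolution_of_stationary {ι : Type*} [Fintype ι] [DecidableEq ι] {S D : Matrix ι ι ℝ}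
    (hSD : S * D = 1) {μ : ι → ℝ} {x : ℝ → ι → ℝ}
    (hx : ∀ θ > 0, ∀ i, θ * exp (μ i + x θ i) + (D *ᵥ x θ) i = 0) :
    IsLogLinearSolution atTop S log (fun θ i => θ * exp (μ i + x θ i)) := by
  refine ⟨?_, fun i => (isBigO_const_const (μ i) one_ne_zero _).congr' ?_ .rfl⟩
  · filter_upwards [eventually_gt_atTop 0] with θ hθ i
    positivity
  filter_upwards [eventually_gt_atTop 0] with θ hθ
  have hDx : (fun i => θ * exp (μ i + x θ i)) = -(D *ᵥ x θ) :=
    funext fun i => eq_neg_of_add_eq_zero_left (hx θ hθ i)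
  rw [hDx, mulVec_neg, mulVec_mulVec, hSD, one_mulVec, Pi.neg_apply,
    log_mul hθ.ne' (exp_ne_zero _), log_exp]
  ring

/-- For each `i` and each real `ℓ > 2`,
`θ e^{μ_i + x*_i(θ)} · (θ e^{μ_i + x*_i(θ)} + D_{ii})^{-ℓ/2} → 0` as `θ → ∞`. -/
theorem lambda_sigma_power_tendsto_zero
    (n : ℕ) (hn : 1 ≤ n) (μ : Fin n → ℝ) (Sig : Matrix (Fin n) (Fin n) ℝ)
    (hSig : Sig.PosDef)
    (D : Matrix (Fin n) (Fin n) ℝ) (hD : D = Sig⁻¹)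
    (xs : ℝ → Fin n → ℝ)
    (hxs : ∀ θ > (0 : ℝ), ∀ i, θ * Real.exp (μ i + xs θ i) + D.mulVec (xs θ) i = 0) :
    ∀ i : Fin n, ∀ ℓ : ℝ, 2 < ℓ →
      Tendsto
        (fun θ : ℝ => θ * Real.exp (μ i + xs θ i) *
          (θ * Real.exp (μ i + xs θ i) + D i i) ^ (-(ℓ / 2)))
        atTop (nhds 0) := by
  intro i ℓ hℓ
  have hdiag : 0 < D i i := (hD ▸ hSig.inv : D.PosDef).diag_pos
  have hSD : Sig * D = 1 := hD ▸ mul_nonsing_inv _ ((isUnit_iff_isUnit_det _).1 hSig.isUnit)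
  rcases (isLogLinearSolution_of_stationary hSD hxs).tendsto_zero_or_atTop hSig
    tendsto_log_atTop i with hzero | htop
  · exact tendsto_mul_add_rpow_of_tendsto_zero hdiag.ne' _ hzero
  · exact tendsto_mul_add_rpow_neg_of_tendsto_atTop _ (by linarith) htop
end

section
/- Define σ_i(θ) = (θ e^{μ_i + x*_i(θ)} + D_{ii})^{-1/2}. Then for every fixed z ∈ ℝ^n, ∑_{i=1}^n θ e^{μ_i + x*_i(θ)} ( e^{σ_i(θ) z_i} − 1 − σ_i(θ) z_i − (1/2) σ_i(θ)² z_i² ) → 0 as θ → ∞. -/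
open Real Matrix Filter

/-!
Write `w_i = θ e^{μ_i + x*_i(θ)}`. The `i`-th summand is continuous in `w_i` at `0`, where it
vanishes, and it is `o(1)` as `w_i → ∞` because `w_i σ_i² ≤ 1` and the Taylor remainder of `exp` is
`o(σ_i²)`. So it suffices that along every ultrafilter each `w_i` tends to `0` or to `∞`.

With `L = log θ` and `u = L - log w`, criticality reads `w = D u + O(1)`, equivalently
`D⁻¹ w = u + O(1)`. In the second form the coordinates with `w_i → 0` can be dropped, leaving a
principal submatrix of `D⁻¹`; the other coordinates stay away from `0`. Testing the second form
against `w` gives `w = O(L)`, hence `log w = o(L)`, and the first form then gives `w / L → D 1`. If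
`(D 1)_i > 0`, then `w_i → ∞`. On the rows with `(D 1)_i = 0`, replacing `L` by `log L` in `u`
changes nothing, and after this change `u_j = O(1)` wherever `(D 1)_j > 0`. Those coordinates drop
out of the first form, and what remains is a smaller system of the same kind with `log L → ∞` in
place of `L`.
-/

open Asymptotics Topology

variable {α ι : Type*} {l : Filter α}

section Matrix

variable [Fintype ι]

lemma isBigO_mulVec {κ : Type*} [Fintype κ] (M : Matrix κ ι ℝ) (u : α → ι → ℝ) :
    (fun t => M *ᵥ u t) =O[l] u :=
  M.mulVecLin.toContinuousLinearMap.isBigO_comp u l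

lemma isBigO_sub_submatrix_mulVec {M : Matrix ι ι ℝ} {u v : α → ι → ℝ} {g : α → ℝ}
    (p : ι → Prop) [DecidablePred p] (h : ∀ i, p i → (fun t => v t i - (M *ᵥ u t) i) =O[l] g)
    (hu : ∀ i, ¬ p i → (fun t => u t i) =O[l] g) :
    (fun t (i : {i // p i}) =>
      v t i - (M.submatrix (↑) (↑) *ᵥ fun j : {i // p i} => u t j) i) =O[l] g := by
  refine isBigO_pi.2 fun i => ?_
  have hdropped : (fun t => ∑ j : {j // ¬ p j}, M i j * u t j) =O[l] g :=
    IsBigO.fun_sum fun j _ => (hu j j.2).const_mul_left _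
  refine ((h i i.2).add hdropped).congr_left fun t => ?_
  have hsplit := Fintype.sum_subtype_add_sum_subtype p fun j => M i j * u t j
  simp only [mulVec, dotProduct, submatrix_apply, ← hsplit]
  ring

lemma exists_pos_mul_sq_norm_le_dotProduct_mulVec {A : Matrix ι ι ℝ} (hA : A.PosDef) :
    ∃ c > 0, ∀ x : ι → ℝ, c * ‖x‖ ^ 2 ≤ x ⬝ᵥ A *ᵥ x := by
  obtain ⟨c, hc, hmin⟩ := (isCompact_sphere (0 : ι → ℝ) 1).exists_forall_le'
    (f := fun x => x ⬝ᵥ A *ᵥ x) (by fun_prop) (a := 0) fun x hx => by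
      simpa using hA.dotProduct_mulVec_pos (ne_zero_of_mem_unit_sphere ⟨x, hx⟩)
  refine ⟨c, hc, fun x => ?_⟩
  rcases eq_or_ne x 0 with rfl | hx
  · simp
  have hnorm : 0 < ‖x‖ := norm_pos_iff.2 hx
  have hunit := hmin (‖x‖⁻¹ • x) (by simp [norm_smul, hnorm.ne'])
  simp only [mulVec_smul, dotProduct_smul, smul_dotProduct, smul_eq_mul] at hunit
  calc c * ‖x‖ ^ 2 ≤ ‖x‖⁻¹ * (‖x‖⁻¹ * (x ⬝ᵥ A *ᵥ x)) * ‖x‖ ^ 2 := by gcongr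
    _ = x ⬝ᵥ A *ᵥ x := by field_simp

lemma dotProduct_le_card_mul_norm_mul_norm (x y : ι → ℝ) :
    x ⬝ᵥ y ≤ Fintype.card ι * (‖x‖ * ‖y‖) := by
  rw [← nsmul_eq_mul, ← Finset.card_univ]
  refine Finset.sum_le_card_nsmul _ _ _ fun i _ => (le_abs_self _).trans ?_
  rw [abs_mul]
  exact mul_le_mul (norm_le_pi_norm x i) (norm_le_pi_norm y i) (abs_nonneg _) (norm_nonneg _)

end Matrix

section Log

lemma isLittleO_log_of_isBigO {f g : α → ℝ} (hg : Tendsto g l atTop)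
    (hf : ∃ ε > 0, ∀ᶠ t in l, ε ≤ f t) (hfg : f =O[l] g) :
    (fun t => log (f t)) =o[l] g := by
  obtain ⟨ε, hε, hεf⟩ := hf
  obtain ⟨C, hC, hfC⟩ := hfg.exists_pos
  have hlog : (fun t => log (f t)) =O[l] fun t => |log ε| + |log C| + |log (g t)| := by
    refine IsBigO.of_bound' ?_
    filter_upwards [hεf, hfC.bound, hg.eventually_gt_atTop 0] with t hlow hup hgt
    have hft : 0 < f t := hε.trans_le hlow
    rw [norm_of_nonneg hft.le, norm_of_nonneg hgt.le] at hup
    have hloglow := log_le_log hε hlow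
    have hlogup := log_le_log hft hup
    rw [log_mul hC.ne' hgt.ne'] at hlogup
    rw [norm_eq_abs, norm_of_nonneg (by positivity), abs_le]
    constructor
    · linarith [neg_abs_le (log ε), abs_nonneg (log C), abs_nonneg (log (g t))]
    · linarith [abs_nonneg (log ε), le_abs_self (log C), le_abs_self (log (g t))]
  refine hlog.trans_isLittleO (IsLittleO.add ?_ ?_)
  · exact (isLittleO_const_id_atTop _).comp_tendsto hg
  · exact (isLittleO_log_id_atTop.comp_tendsto hg).norm_left

lemma isBigO_log_sub_log_of_tendsto_div {f g : α → ℝ} {a : ℝ} (ha : a ≠ 0)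
    (h : Tendsto (fun t => f t / g t) l (𝓝 a)) :
    (fun t => log (g t) - log (f t)) =O[l] fun _ => (1 : ℝ) := by
  refine (((h.log ha).isBigO_one ℝ).neg_left).congr' ?_ .rfl
  filter_upwards [h.eventually_ne ha] with t ht
  obtain ⟨hf, hg⟩ := div_ne_zero_iff.1 ht
  rw [log_div hf hg, neg_sub]

end Log

lemma exists_pos_eventually_le_of_not_tendsto_zero {U : Ultrafilter α} {f : α → ℝ}
    (hf : ∀ᶠ t in U, 0 ≤ f t) (h : ¬ Tendsto f U (𝓝 0)) : ∃ ε > 0, ∀ᶠ t in U, ε ≤ f t := by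
  contrapose! h
  refine Metric.tendsto_nhds.2 fun ε hε => ?_
  filter_upwards [hf, h ε hε] with t h0 ht
  rwa [dist_zero_right, norm_of_nonneg h0]

section Exponent

/-- The summand of the exponent with weight `w = θ e^{μ_i + x*_i(θ)}` and `σ = (w + d)^{-1/2}`, as a
function of `w`. -/
noncomputable def exponentTerm (d z w : ℝ) : ℝ :=
  w * (exp ((w + d) ^ (-(1 : ℝ) / 2) * z) - 1 - (w + d) ^ (-(1 : ℝ) / 2) * z
    - (1 / 2) * ((w + d) ^ (-(1 : ℝ) / 2)) ^ 2 * z ^ 2)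

lemma tendsto_exponentTerm_zero {d : ℝ} (hd : 0 < d) (z : ℝ) :
    Tendsto (exponentTerm d z) (𝓝 0) (𝓝 0) := by
  have hσ : ContinuousAt (fun w : ℝ => (w + d) ^ (-(1 : ℝ) / 2)) 0 :=
    ContinuousAt.rpow_const (by fun_prop) (.inl (by simpa using hd.ne'))
  have hcont : ContinuousAt (exponentTerm d z) 0 := by
    unfold exponentTerm
    fun_prop
  simpa [exponentTerm] using hcont.tendsto

lemma exp_sub_taylor_two_isLittleO :
    (fun y : ℝ => exp y - 1 - y - (1 / 2) * y ^ 2) =o[𝓝 0] fun y => y ^ 2 := by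
  refine (exp_sub_sum_range_succ_isLittleO_pow 2).congr_left fun y => ?_
  simp only [Finset.sum_range_succ, Finset.sum_range_zero, Nat.factorial]
  push_cast
  ring

lemma tendsto_exponentTerm_atTop (d z : ℝ) : Tendsto (exponentTerm d z) atTop (𝓝 0) := by
  set σ : ℝ → ℝ := fun w => (w + d) ^ (-(1 : ℝ) / 2) with hσ
  have hadd : Tendsto (fun w => w + d) atTop atTop := tendsto_atTop_add_const_right _ d tendsto_id
  have hσ0 : Tendsto (fun w => σ w * z) atTop (𝓝 0) := by
    simpa [hσ, Function.comp_def, neg_div] using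
      ((tendsto_rpow_neg_atTop (y := 1 / 2) (by norm_num)).comp hadd).mul_const z
  have hσsq : (fun w => w * (σ w * z) ^ 2) =O[atTop] fun _ => (1 : ℝ) := by
    have hw : (fun w : ℝ => w) =O[atTop] fun w => w + d := by
      refine ((isBigO_refl (fun w => w + d) atTop).sub
        ((isLittleO_const_id_atTop d).comp_tendsto hadd).isBigO).congr_left fun w => ?_
      exact add_sub_cancel_right w d
    refine ((hw.mul (isBigO_refl (fun w => (σ w * z) ^ 2) atTop)).trans_eventuallyEq ?_).trans
      (isBigO_const_const (z ^ 2) one_ne_zero atTop)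
    filter_upwards [hadd.eventually_gt_atTop 0] with w hw
    have hinv : σ w ^ 2 = (w + d)⁻¹ := by
      rw [hσ, ← rpow_natCast, ← rpow_mul hw.le]
      norm_num [rpow_neg_one]
    rw [mul_pow, hinv, mul_inv_cancel_left₀ hw.ne']
  have hterm := (((isBigO_refl (fun w : ℝ => w) atTop).mul_isLittleO
    (exp_sub_taylor_two_isLittleO.comp_tendsto hσ0)).trans_isBigO hσsq)
  refine ((isLittleO_one_iff ℝ).1 hterm).congr fun w => ?_
  simp only [Function.comp_apply, exponentTerm, hσ, mul_pow, mul_assoc]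

end Exponent

section Gradient

/-- The vector `ℓ - log x`. For `ℓ = log θ` and `x = θ e^{μ + y}` it is `-(μ + y)`, which lets the
critical point equation be written in terms of the weights alone. -/
noncomputable def logDeficit (ℓ : ℝ) (x : ι → ℝ) : ι → ℝ := fun i => ℓ - log (x i)

lemma logDeficit_mul_exp {θ : ℝ} (hθ : 0 < θ) (y : ι → ℝ) :
    logDeficit (log θ) (fun i => θ * exp (y i)) = -y := by
  ext i
  rw [logDeficit, log_mul hθ.ne' (exp_ne_zero _), log_exp, Pi.neg_apply]
  ring

variable [Fintype ι] {D : Matrix ι ι ℝ} {L : α → ℝ} {w : α → ι → ℝ}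

lemma dotProduct_logDeficit_le {x : ι → ℝ} (hx : ∀ i, 0 ≤ x i) {ℓ : ℝ} (hℓ : 0 ≤ ℓ) :
    x ⬝ᵥ logDeficit ℓ x ≤ Fintype.card ι * (ℓ * ‖x‖ + 1) := by
  rw [← nsmul_eq_mul, ← Finset.card_univ]
  refine Finset.sum_le_card_nsmul _ _ _ fun i _ => ?_
  have hentropy := self_sub_one_le_mul_log (hx i)
  have hle : ℓ * x i ≤ ℓ * ‖x‖ := by
    gcongr
    exact (le_abs_self _).trans (norm_le_pi_norm x i)
  rw [logDeficit]
  linarith [hx i]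

/-- The family of weights `w = θ e^{μ + x}`, with `L = log θ`, comes from approximate critical
points `x` of `h_θ`: the gradient `w + D x` is bounded along `l`. The offset `μ` only contributes
`D μ`, so it does not appear. -/
def HasBoundedGradient (D : Matrix ι ι ℝ) (l : Filter α) (L : α → ℝ) (w : α → ι → ℝ) : Prop :=
  (fun t => w t - D *ᵥ logDeficit (L t) (w t)) =O[l] fun _ => (1 : ℝ)

lemma hasBoundedGradient_iff_isBigO_inv_mulVec [DecidableEq ι] (hD : IsUnit D) :
    HasBoundedGradient D l L w ↔
      (fun t => D⁻¹ *ᵥ w t - logDeficit (L t) (w t)) =O[l] fun _ => (1 : ℝ) := by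
  have hdet : IsUnit D.det := (isUnit_iff_isUnit_det _).1 hD
  refine ⟨fun h => ((isBigO_mulVec D⁻¹ _).trans h).congr_left fun t => ?_,
    fun h => ((isBigO_mulVec D _).trans h).congr_left fun t => ?_⟩
  · rw [mulVec_sub, mulVec_mulVec, nonsing_inv_mul _ hdet, one_mulVec]
  · rw [mulVec_sub, mulVec_mulVec, mul_nonsing_inv _ hdet, one_mulVec]

namespace HasBoundedGradient

lemma isBigO (h : HasBoundedGradient D l L w) (hD : D.PosDef) (hL : Tendsto L l atTop)
    (hw : ∀ᶠ t in l, ∀ i, 0 ≤ w t i) : w =O[l] L := by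
  classical
  obtain ⟨c, hc, hcoercive⟩ := exists_pos_mul_sq_norm_le_dotProduct_mulVec hD.inv
  obtain ⟨C, hC, hbound⟩ :=
    ((hasBoundedGradient_iff_isBigO_inv_mulVec hD.isUnit).1 h).exists_nonneg
  set n : ℝ := (Fintype.card ι : ℝ)
  refine IsBigO.of_bound (max 1 (n * (C + 2) / c)) ?_
  filter_upwards [hw, hbound.bound, hL.eventually_ge_atTop 1] with t hwt hrt hLt
  rw [norm_one, mul_one] at hrt
  rw [norm_of_nonneg (by linarith : 0 ≤ L t), max_mul_of_nonneg _ _ (by linarith), one_mul,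
    le_max_iff, or_iff_not_imp_left, not_le]
  intro hlt
  have hquad : c * ‖w t‖ * ‖w t‖ ≤ n * (C + 2) * L t * ‖w t‖ := calc
    c * ‖w t‖ * ‖w t‖ = c * ‖w t‖ ^ 2 := by ring
    _ ≤ w t ⬝ᵥ D⁻¹ *ᵥ w t := hcoercive _
    _ = w t ⬝ᵥ (D⁻¹ *ᵥ w t - logDeficit (L t) (w t)) + w t ⬝ᵥ logDeficit (L t) (w t) := by
      rw [← dotProduct_add, sub_add_cancel]
    _ ≤ n * (‖w t‖ * C) + n * (L t * ‖w t‖ + 1) := by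
      refine add_le_add ((dotProduct_le_card_mul_norm_mul_norm _ _).trans (by gcongr))
        (dotProduct_logDeficit_le hwt (by linarith))
    _ ≤ n * (‖w t‖ * (C * L t)) + n * (L t * ‖w t‖ + L t * ‖w t‖) := by
      gcongr
      · exact le_mul_of_one_le_right hC hLt
      · exact one_le_mul_of_one_le_of_one_le hLt (hLt.trans hlt.le)
    _ = n * (C + 2) * L t * ‖w t‖ := by ring
  rw [div_mul_eq_mul_div, le_div_iff₀' hc]
  exact le_of_mul_le_mul_right hquad (by linarith)

lemma tendsto_inv_smul (h : HasBoundedGradient D l L w) (hL : Tendsto L l atTop)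
    (hlog : ∀ i, (fun t => log (w t i)) =o[l] L) :
    Tendsto (fun t => (L t)⁻¹ • w t) l (𝓝 (D *ᵥ 1)) := by
  have hone : (fun _ => (1 : ℝ)) =o[l] L := (isLittleO_const_id_atTop 1).comp_tendsto hL
  have hresidual := (h.trans_isLittleO hone).tendsto_inv_smul_nhds_zero
  have hdeficit : Tendsto (fun t => (L t)⁻¹ • logDeficit (L t) (w t)) l (𝓝 1) := by
    refine tendsto_pi_nhds.2 fun i => ?_
    have hratio := (hlog i).tendsto_div_nhds_zero.const_sub 1
    rw [sub_zero] at hratio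
    refine hratio.congr' ?_
    filter_upwards [hL.eventually_ne_atTop 0] with t ht
    simp only [Pi.smul_apply, smul_eq_mul, logDeficit]
    field_simp
  have hmul : Tendsto (fun t => D *ᵥ ((L t)⁻¹ • logDeficit (L t) (w t))) l (𝓝 (D *ᵥ 1)) :=
    ((by fun_prop : Continuous fun x => D *ᵥ x).tendsto 1).comp hdeficit
  have hsum := hresidual.add hmul
  rw [zero_add] at hsum
  refine hsum.congr fun t => ?_
  rw [mulVec_smul, ← smul_add, sub_add_cancel]

lemma restrict_inv [DecidableEq ι] (h : HasBoundedGradient D l L w) (hD : D.PosDef)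
    (p : ι → Prop) [DecidablePred p]
    (hw : ∀ i, ¬ p i → (fun t => w t i) =O[l] fun _ => (1 : ℝ)) :
    HasBoundedGradient (D⁻¹.submatrix (↑) (↑))⁻¹ l L fun t (i : {i // p i}) => w t i := by
  have hA : (D⁻¹.submatrix ((↑) : {i // p i} → ι) (↑)).PosDef :=
    hD.inv.submatrix Subtype.val_injective
  have hdual := ((hasBoundedGradient_iff_isBigO_inv_mulVec hD.isUnit).1 h).symm
  rw [hasBoundedGradient_iff_isBigO_inv_mulVec hA.inv.isUnit,
    nonsing_inv_nonsing_inv _ ((isUnit_iff_isUnit_det _).1 hA.isUnit)]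
  exact (isBigO_sub_submatrix_mulVec p (fun i _ => isBigO_pi.1 hdual i) hw).symm

lemma restrict_of_mulVec_one_eq_zero (h : HasBoundedGradient D l L w) (L' : α → ℝ) (p : ι → Prop)
    [DecidablePred p] (hp : ∀ i, p i → (D *ᵥ 1) i = 0)
    (hw : ∀ i, ¬ p i → (fun t => L' t - log (w t i)) =O[l] fun _ => (1 : ℝ)) :
    HasBoundedGradient (D.submatrix (↑) (↑)) l L' fun t (i : {i // p i}) => w t i := by
  refine isBigO_sub_submatrix_mulVec (u := fun t => logDeficit (L' t) (w t)) p
    (fun i hi => ?_) hw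
  refine (isBigO_pi.1 h i).congr_left fun t => ?_
  have hshift : logDeficit (L t) (w t)
      = logDeficit (L' t) (w t) + (L t - L' t) • 1 := by
    ext k
    simp [logDeficit]
  rw [hshift, mulVec_add, mulVec_smul]
  simp [hp i hi]

lemma tendsto_atTop (h : HasBoundedGradient D l L w) (hD : D.PosDef)
    (hL : Tendsto L l atTop) (hw : ∀ i, ∃ ε > 0, ∀ᶠ t in l, ε ≤ w t i) (i : ι) :
    Tendsto (fun t => w t i) l atTop := by
  rcases l.eq_or_neBot with rfl | _
  · exact tendsto_bot
  induction hn : Fintype.card ι using Nat.strong_induction_on generalizing ι L with | _ n ih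
  have hnonneg : ∀ᶠ t in l, ∀ i, 0 ≤ w t i := eventually_all.2 fun k => by
    obtain ⟨ε, hε, hk⟩ := hw k
    exact hk.mono fun t ht => hε.le.trans ht
  have hwL := isBigO_pi.1 (h.isBigO hD hL hnonneg)
  have hrate (k : ι) : Tendsto (fun t => w t k / L t) l (𝓝 ((D *ᵥ 1) k)) := by
    simpa only [Pi.smul_apply, smul_eq_mul, inv_mul_eq_div] using
      tendsto_pi_nhds.1 (h.tendsto_inv_smul hL
        fun j => isLittleO_log_of_isBigO hL (hw j) (hwL j)) k
  by_cases hi : (D *ᵥ 1) i = 0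
  · obtain ⟨k, hk⟩ : ∃ k, (D *ᵥ 1) k ≠ 0 := by
      by_contra! hzero
      have : Nonempty ι := ⟨i⟩
      have hpos := hD.dotProduct_mulVec_pos (one_ne_zero : (1 : ι → ℝ) ≠ 0)
      rw [funext hzero] at hpos
      simp at hpos
    classical
    exact ih _ (hn ▸ Fintype.card_subtype_lt hk)
      (h.restrict_of_mulVec_one_eq_zero (fun t => log (L t)) (fun j => (D *ᵥ 1) j = 0)
        (fun _ => id) fun j hj => isBigO_log_sub_log_of_tendsto_div hj (hrate j))
      (hD.submatrix Subtype.val_injective) (tendsto_log_atTop.comp hL) (fun j => hw j) ⟨i, hi⟩ rfl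
  · have hpos : 0 < (D *ᵥ 1) i := by
      refine (ge_of_tendsto (hrate i) ?_).lt_of_ne' hi
      filter_upwards [hnonneg, hL.eventually_ge_atTop 0] with t hwt hLt
      exact div_nonneg (hwt i) hLt
    refine ((hrate i).pos_mul_atTop hpos hL).congr' ?_
    filter_upwards [hL.eventually_ne_atTop 0] with t ht
    exact div_mul_cancel₀ _ ht

lemma tendsto_zero_or_atTop {U : Ultrafilter α} (h : HasBoundedGradient D U L w)
    (hD : D.PosDef) (hL : Tendsto L U atTop) (hw : ∀ᶠ t in U, ∀ i, 0 ≤ w t i) (i : ι) :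
    Tendsto (fun t => w t i) U (𝓝 0) ∨ Tendsto (fun t => w t i) U atTop := by
  classical
  refine or_iff_not_imp_left.2 fun hi => ?_
  have hrestrict := h.restrict_inv hD (fun k => ¬ Tendsto (fun t => w t k) U (𝓝 0))
    fun k hk => (not_not.1 hk).isBigO_one ℝ
  exact hrestrict.tendsto_atTop (hD.inv.submatrix Subtype.val_injective).inv hL
    (fun k => exists_pos_eventually_le_of_not_tendsto_zero (hw.mono fun t ht => ht k) k.2) ⟨i, hi⟩

end HasBoundedGradient

end Gradient

theorem second_exponent_tendsto_zero_general [Fintype ι] {D : Matrix ι ι ℝ} (hD : D.PosDef)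
    {d : ι → ℝ} (hd : ∀ i, 0 < d i) {θ : α → ℝ} (hθ : Tendsto θ l atTop) (μ : ι → ℝ)
    {x : α → ι → ℝ}
    (hx : (fun t => (fun i => θ t * exp (μ i + x t i)) + D *ᵥ x t) =O[l] fun _ => (1 : ℝ))
    (z : ι → ℝ) :
    Tendsto (fun t => ∑ i, exponentTerm (d i) (z i) (θ t * exp (μ i + x t i))) l (𝓝 0) := by
  have hgrad : HasBoundedGradient D l (fun t => log (θ t)) fun t i => θ t * exp (μ i + x t i) := by
    refine (hx.add (isBigO_const_const (D *ᵥ μ) one_ne_zero l)).congr' ?_ .rfl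
    filter_upwards [hθ.eventually_gt_atTop 0] with t ht
    have hdeficit := logDeficit_mul_exp ht (μ + x t)
    simp only [Pi.add_apply] at hdeficit
    rw [hdeficit, mulVec_neg, mulVec_add]
    abel
  refine (tendsto_iff_ultrafilter _ _ _).2 fun U hU => ?_
  rw [← Finset.sum_const_zero (s := (Finset.univ : Finset ι))]
  refine tendsto_finsetSum _ fun i _ => ?_
  have hpos : ∀ᶠ t in U, ∀ i, 0 ≤ θ t * exp (μ i + x t i) :=
    hU ((hθ.eventually_ge_atTop 0).mono fun t ht i => by positivity)
  rcases HasBoundedGradient.tendsto_zero_or_atTop (hgrad.mono hU) hD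
    (tendsto_log_atTop.comp (hθ.mono_left hU)) hpos i with h0 | htop
  · exact (tendsto_exponentTerm_zero (hd i) (z i)).comp h0
  · exact (tendsto_exponentTerm_atTop (d i) (z i)).comp htop

/-- With `σ_i(θ) = (θ e^{μ_i + x*_i(θ)} + D_{ii})^{-1/2}`, for every
fixed `z ∈ ℝⁿ`,
`∑ i, θ e^{μ_i + x*_i(θ)} (e^{σ_i z_i} − 1 − σ_i z_i − ½ σ_i² z_i²) → 0`
as `θ → ∞`. -/
theorem second_exponent_tendsto_zero
    (n : ℕ) (hn : 1 ≤ n) (μ : Fin n → ℝ) (Sig : Matrix (Fin n) (Fin n) ℝ)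
    (hSig : Sig.PosDef)
    (D : Matrix (Fin n) (Fin n) ℝ) (hD : D = Sig⁻¹)
    (xs : ℝ → Fin n → ℝ)
    (hxs : ∀ θ > (0 : ℝ), ∀ i, θ * Real.exp (μ i + xs θ i) + D.mulVec (xs θ) i = 0) :
    ∀ z : Fin n → ℝ,
      Tendsto
        (fun θ : ℝ => ∑ i, θ * Real.exp (μ i + xs θ i) *
          (Real.exp ((θ * Real.exp (μ i + xs θ i) + D i i) ^ (-(1 : ℝ) / 2) * z i)
            - 1 - (θ * Real.exp (μ i + xs θ i) + D i i) ^ (-(1 : ℝ) / 2) * z i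
            - (1 / 2) * ((θ * Real.exp (μ i + xs θ i) + D i i) ^ (-(1 : ℝ) / 2)) ^ 2
              * (z i) ^ 2))
        atTop (nhds 0) := by
  have hDpos : D.PosDef := hD ▸ hSig.inv
  refine second_exponent_tendsto_zero_general hDpos (fun _ => hDpos.diag_pos) tendsto_id μ
    (EventuallyEq.trans_isBigO ?_ (isBigO_zero _ _))
  filter_upwards [eventually_gt_atTop 0] with θ hθ using funext (hxs θ hθ)
end

section
/- Let D be a symmetric positive definite n×n real matrix and let A, B, C, E be pairwise disjoint sets whose union is {1,…,n}. Let S = {w ∈ ℝ^n : w_i = 0 for i ∈ A, w_i = 1 for i ∈ B, w_i ≤ 0 for i ∈ C, (Dw)_i = 0 for i ∈ E}, assume S is nonempty, and let w̄ minimise w ↦ wᵀ D w over S. Then for every i ∈ C: (D w̄)_i ≤ 0, and (D w̄)_i = 0 whenever w̄_i < 0. -/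
/-!
Write `W` for the space of vectors supported in `E`, so that the constraint `(D w)_i = 0` for
`i ∈ E` says that `w` is `D`-orthogonal to `W`. Since `D` is positive semidefinite, every `v` is
`z + y` with `z ∈ W` and `y` orthogonal to `W`, and `yᵀ D y ≤ vᵀ D v`. The remaining constraints do
not involve the coordinates in `E`, so replacing `v` by `y` preserves them: the constraint on `E`
does not change the minimum, and `w̄` already minimises over a convex set cut out by coordinate
constraints. There the first-order condition `0 ≤ w̄ᵀ D (v - w̄)`, tested on vectors `v` that differ
from `w̄` in a single coordinate, is the claim.
-/

open Matrix

theorem nonneg_of_forall_add_mul_nonneg {𝕜 : Type*} [Field 𝕜] [LinearOrder 𝕜]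
    [IsStrictOrderedRing 𝕜] {a b : 𝕜} (h : ∀ t, 0 < t → t ≤ 1 → 0 ≤ a + t * b) : 0 ≤ a := by
  by_contra! ha
  -- At `t = -a / (|b| - a)` one has `t * |b| < -a`.
  have hden : 0 < |b| - a := by linarith [abs_nonneg b]
  have ht0 : 0 < -a / (|b| - a) := div_pos (neg_pos.2 ha) hden
  have ht1 : -a / (|b| - a) ≤ 1 := (div_le_one hden).2 (by linarith [abs_nonneg b])
  have hgap : a + -a / (|b| - a) * |b| = -(a * a) / (|b| - a) := by field_simp; ring
  have hneg : -(a * a) / (|b| - a) < 0 :=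
    div_neg_of_neg_of_pos (neg_neg_of_pos (mul_pos_of_neg_of_neg ha ha)) hden
  linarith [h _ ht0 ht1, mul_le_mul_of_nonneg_left (le_abs_self b) ht0.le]

theorem apply_self_le_apply_add_of_apply_eq_zero {R M : Type*} [CommRing R] [PartialOrder R]
    [IsOrderedAddMonoid R] [AddCommGroup M] [Module R M] {B : LinearMap.BilinForm R M}
    (hB : B.IsPosSemidef) {y z : M} (hzy : B z y = 0) : B y y ≤ B (z + y) (z + y) := by
  have hyz : B y z = 0 := (hB.isSymm.eq y z).trans hzy
  have hpythagoras : B (z + y) (z + y) = B z z + B y y := by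
    simp only [map_add, LinearMap.add_apply, hzy, hyz, add_zero, zero_add]
  exact hpythagoras ▸ le_add_of_nonneg_left (hB.nonneg z)

section BilinForm

variable {𝕜 M : Type*} [Field 𝕜] [LinearOrder 𝕜] [IsStrictOrderedRing 𝕜]
  [AddCommGroup M] [Module 𝕜 M] {B : LinearMap.BilinForm 𝕜 M}

theorem sup_orthogonal_eq_top_of_isPosSemidef (hB : B.IsPosSemidef) (W : Submodule 𝕜 M)
    [FiniteDimensional 𝕜 W] : W ⊔ B.orthogonal W = ⊤ := by
  refine eq_top_iff.2 fun v _ => ?_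
  -- A vector `z ∈ W` in the radical of `B.restrict W` satisfies `B z z = 0`, hence `B z = 0`. So
  -- the functional `B · v` vanishes on this radical and is represented by some `x ∈ W`.
  have hker : (B.flip v).domRestrict W ∈ (LinearMap.ker (B.restrict W)).dualAnnihilator := by
    refine (Submodule.mem_dualAnnihilator _).2 fun z hz => ?_
    have hzz : B z z = 0 := LinearMap.congr_fun hz z
    have hz0 : B z = 0 :=
      (B.apply_apply_same_eq_zero_iff hB.nonneg (LinearMap.BilinForm.isSymm_iff.1 hB.isSymm)).1 hzz
    exact LinearMap.congr_fun hz0 v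
  rw [LinearMap.dualAnnihilator_ker_eq_range_flip] at hker
  obtain ⟨x, hx⟩ := hker
  have horth : v - x ∈ B.orthogonal W := fun z hz => by
    have hxz : B z x = B z v := LinearMap.congr_fun hx ⟨z, hz⟩
    rw [map_sub, hxz, sub_self]
  exact Submodule.mem_sup.2 ⟨x, x.2, v - x, horth, add_sub_cancel _ _⟩

theorem isMinOn_of_isMinOn_inter_orthogonal (hB : B.IsPosSemidef) {W : Submodule 𝕜 M}
    [FiniteDimensional 𝕜 W] {P : Set M} (hP : ∀ v ∈ P, ∀ z ∈ W, v - z ∈ P) {w : M}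
    (hmin : IsMinOn (fun v => B v v) (P ∩ B.orthogonal W) w) : IsMinOn (fun v => B v v) P w := by
  refine isMinOn_iff.2 fun v hv => ?_
  obtain ⟨z, hz, y, hy, rfl⟩ :=
    Submodule.mem_sup.1 (sup_orthogonal_eq_top_of_isPosSemidef hB W ▸ Submodule.mem_top (x := v))
  have hyP : y ∈ P := by simpa only [add_sub_cancel_left] using hP _ hv z hz
  exact (isMinOn_iff.1 hmin y ⟨hyP, hy⟩).trans
    (apply_self_le_apply_add_of_apply_eq_zero hB (hy z hz))

theorem apply_sub_nonneg_of_isMinOn_segment (hB : B.IsSymm) {v w : M}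
    (hmin : IsMinOn (fun x => B x x) (segment 𝕜 w v) w) : 0 ≤ B w (v - w) := by
  set d := v - w
  have hslope : 0 ≤ 2 * B w d := nonneg_of_forall_add_mul_nonneg (b := B d d) fun t ht0 ht1 => by
    have hmem : w + t • d ∈ segment 𝕜 w v := segment_eq_image' 𝕜 w v ▸ ⟨t, ⟨ht0.le, ht1⟩, rfl⟩
    have hle : B w w ≤ B (w + t • d) (w + t • d) := isMinOn_iff.1 hmin _ hmem
    have hexpand : B (w + t • d) (w + t • d) = B w w + t * (2 * B w d + t * B d d) := by
      simp only [map_add, map_smul, LinearMap.add_apply, LinearMap.smul_apply, smul_eq_mul,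
        hB.eq d w]
      ring
    exact nonneg_of_mul_nonneg_right (by linarith) ht0
  exact nonneg_of_mul_nonneg_right hslope two_pos

end BilinForm

section CoordinateConstraints

variable {R ι : Type*} [Preorder R]

/-- The vectors with coordinates `a i` prescribed for `i ∈ A` and bounded above by `u i` for
`i ∈ C`, written with products of sets so that convexity is inherited from the factors. -/
def coordinateConstraints (A C : Set ι) (a u : ι → R) : Set (ι → R) :=
  A.pi (fun i => {a i}) ∩ C.pi (fun i => Set.Iic (u i))

theorem update_mem_coordinateConstraints [DecidableEq ι] {A C : Set ι} {a u w : ι → R}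
    (hw : w ∈ coordinateConstraints A C a u) {i : ι} (hi : i ∉ A) {x : R} (hx : x ≤ u i) :
    Function.update w i x ∈ coordinateConstraints A C a u := by
  refine ⟨fun j hj => ?_, fun j hj => ?_⟩
  · exact Function.update_of_ne (ne_of_mem_of_not_mem hj hi) x w ▸ hw.1 j hj
  · rcases eq_or_ne j i with rfl | hji
    · exact (Function.update_self j x w).trans_le hx
    · exact (Function.update_of_ne hji x w).trans_le (hw.2 j hj)

theorem mem_coordinateConstraints_of_eqOn {A C : Set ι} {a u v w : ι → R}
    (h : Set.EqOn v w (A ∪ C)) (hv : v ∈ coordinateConstraints A C a u) :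
    w ∈ coordinateConstraints A C a u :=
  ⟨fun i hi => h (.inl hi) ▸ hv.1 i hi, fun i hi => h (.inr hi) ▸ hv.2 i hi⟩

theorem sub_mem_coordinateConstraints [Ring R] [Finite ι] {A C E : Set ι}
    (hE : Disjoint (A ∪ C) E) {a u v z : ι → R}
    (hv : v ∈ coordinateConstraints A C a u) (hz : z ∈ Pi.spanSubset R E) :
    v - z ∈ coordinateConstraints A C a u := by
  refine mem_coordinateConstraints_of_eqOn (fun i hi => ?_) hv
  simp [Pi.mem_spanSubset_iff.1 hz i (hE.notMem_of_mem_left hi)]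

theorem convex_coordinateConstraints {𝕜 : Type*} [Semiring 𝕜] [PartialOrder 𝕜]
    [IsOrderedRing 𝕜] (A C : Set ι) (a u : ι → 𝕜) :
    Convex 𝕜 (coordinateConstraints A C a u) :=
  (convex_pi fun i _ => convex_singleton (a i)).inter (convex_pi fun i _ => convex_Iic (u i))

theorem setOf_constraints_eq_coordinateConstraints_inter [NonAssocSemiring R] [Fintype ι]
    (D : Matrix ι ι R) {A B C E : Finset ι} (hAB : Disjoint A B) :
    {w : ι → R | (∀ i ∈ A, w i = 0) ∧ (∀ i ∈ B, w i = 1) ∧ (∀ i ∈ C, w i ≤ 0) ∧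
      (∀ i ∈ E, D.mulVec w i = 0)} =
    coordinateConstraints (A ∪ B : Set ι) C ((B : Set ι).indicator 1) 0 ∩
      {v | Set.EqOn (D *ᵥ v) 0 E} := by
  ext w
  have hA : (∀ i ∈ A, w i = (B : Set ι).indicator 1 i) ↔ ∀ i ∈ A, w i = 0 :=
    forall₂_congr fun i hi => by simp [Finset.disjoint_left.1 hAB hi]
  have hB : (∀ i ∈ B, w i = (B : Set ι).indicator 1 i) ↔ ∀ i ∈ B, w i = 1 :=
    forall₂_congr fun i hi => by simp [hi]
  simp [coordinateConstraints, Set.union_pi, Set.mem_pi, Set.EqOn, hA, hB, and_assoc]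

end CoordinateConstraints

section Matrix

variable {R 𝕜 ι : Type*} [Fintype ι]

theorem mem_orthogonal_spanSubset_iff [CommRing R] [DecidableEq ι] {D : Matrix ι ι R} {E : Set ι}
    {v : ι → R} : v ∈ D.toBilin'.orthogonal (Pi.spanSubset R E) ↔ Set.EqOn (D *ᵥ v) 0 E := by
  simp only [LinearMap.BilinForm.mem_orthogonal_iff, toBilin'_apply', Pi.mem_spanSubset_iff]
  refine ⟨fun h i hi => ?_, fun h z hz => Finset.sum_eq_zero fun i _ => ?_⟩
  · simpa using h (Pi.single i 1) fun j hj => Pi.single_eq_of_ne (ne_of_mem_of_not_mem hi hj).symm 1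
  · by_cases hi : i ∈ E
    · exact mul_eq_zero_of_right _ (h hi)
    · exact mul_eq_zero_of_left (hz i hi) _

theorem isPosSemidef_toBilin' [CommRing R] [PartialOrder R] [StarRing R] [TrivialStar R]
    [DecidableEq ι] {D : Matrix ι ι R} (hD : D.PosSemidef) :
    D.toBilin'.IsPosSemidef where
  isSymm := isSymm_toBilin'_iff_isSymm.2 ((conjTranspose_eq_transpose_of_trivial D).symm.trans hD.1)
  isNonneg := ⟨fun v => by
    simpa only [toBilin'_apply', star_trivial] using hD.dotProduct_mulVec_nonneg v⟩

variable [Field 𝕜] [LinearOrder 𝕜] [IsStrictOrderedRing 𝕜]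

theorem mulVec_mul_sub_nonneg_of_isMinOn [DecidableEq ι] {D : Matrix ι ι 𝕜} (hD : D.IsSymm)
    {P : Set (ι → 𝕜)} (hP : Convex 𝕜 P) {w : ι → 𝕜} (hw : w ∈ P)
    (hmin : IsMinOn (fun v => D.toBilin' v v) P w) {i : ι} {x : 𝕜}
    (hx : Function.update w i x ∈ P) : 0 ≤ (D *ᵥ w) i * (x - w i) := by
  have hsymm : D.toBilin'.IsSymm := isSymm_toBilin'_iff_isSymm.2 hD
  have hdir : Function.update w i x - w = Pi.single i (x - w i) := by
    rw [Pi.update_eq_sub_add_single, Pi.single_sub]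
    abel
  have hnonneg := apply_sub_nonneg_of_isMinOn_segment hsymm
    (hmin.on_subset (hP.segment_subset hw hx))
  rwa [hsymm.eq, hdir, toBilin'_apply', single_dotProduct, mul_comm] at hnonneg

theorem constrained_quadratic_minimiser_kkt_general [StarRing 𝕜] [TrivialStar 𝕜]
    {D : Matrix ι ι 𝕜} (hD : D.PosSemidef) {A C E : Set ι} (hAC : Disjoint A C)
    (hE : Disjoint (A ∪ C) E) {a u w : ι → 𝕜}
    (hw : w ∈ coordinateConstraints A C a u ∩ {v | Set.EqOn (D *ᵥ v) 0 E})
    (hmin : ∀ v ∈ coordinateConstraints A C a u ∩ {v | Set.EqOn (D *ᵥ v) 0 E},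
      w ⬝ᵥ D *ᵥ w ≤ v ⬝ᵥ D *ᵥ v) :
    ∀ i ∈ C, (D *ᵥ w) i ≤ 0 ∧ (w i < u i → (D *ᵥ w) i = 0) := by
  classical
  intro i hi
  have hB := isPosSemidef_toBilin' hD
  have hminP : IsMinOn (fun v => D.toBilin' v v) (coordinateConstraints A C a u) w :=
    isMinOn_of_isMinOn_inter_orthogonal hB (fun _ hv _ hz => sub_mem_coordinateConstraints hE hv hz)
      (isMinOn_iff.2 fun v hv => by
        simpa only [toBilin'_apply'] using hmin v ⟨hv.1, mem_orthogonal_spanSubset_iff.1 hv.2⟩)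
  have hvar : ∀ x ≤ u i, 0 ≤ (D *ᵥ w) i * (x - w i) := fun x hx =>
    mulVec_mul_sub_nonneg_of_isMinOn (isSymm_toBilin'_iff_isSymm.1 hB.isSymm)
      (convex_coordinateConstraints A C a u) hw.1 hminP
      (update_mem_coordinateConstraints hw.1 (hAC.notMem_of_mem_right hi) hx)
  have hwi : w i ≤ u i := hw.1.2 i hi
  have hle : (D *ᵥ w) i ≤ 0 := by linarith [hvar (w i - 1) (by linarith)]
  exact ⟨hle, fun hlt =>
    hle.antisymm (nonneg_of_mul_nonneg_left (hvar (u i) le_rfl) (sub_pos.2 hlt))⟩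

end Matrix

/-- Let `D` be symmetric positive definite and `A, B, C, E` be
pairwise disjoint sets with union `{1,…,n}`. Let
`S = {w : w_i = 0 on A, w_i = 1 on B, w_i ≤ 0 on C, (Dw)_i = 0 on E}` be
nonempty and `w̄` minimise `w ↦ wᵀ D w` over `S`. Then for every `i ∈ C`:
`(D w̄)_i ≤ 0`, and `(D w̄)_i = 0` whenever `w̄_i < 0`. -/
theorem constrained_quadratic_minimiser_kkt
    (n : ℕ) (hn : 1 ≤ n)
    (D : Matrix (Fin n) (Fin n) ℝ) (hD : D.PosDef)
    (A B C E : Finset (Fin n))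
    (hAB : Disjoint A B) (hAC : Disjoint A C) (hAE : Disjoint A E)
    (hBC : Disjoint B C) (hBE : Disjoint B E) (hCE : Disjoint C E)
    (hunion : A ∪ B ∪ C ∪ E = Finset.univ)
    (S : Set (Fin n → ℝ))
    (hS : S = {w : Fin n → ℝ |
      (∀ i ∈ A, w i = 0) ∧ (∀ i ∈ B, w i = 1) ∧ (∀ i ∈ C, w i ≤ 0) ∧
      (∀ i ∈ E, D.mulVec w i = 0)})
    (hSne : S.Nonempty)
    (wbar : Fin n → ℝ) (hwbarS : wbar ∈ S)
    (hmin : ∀ v ∈ S, wbar ⬝ᵥ D.mulVec wbar ≤ v ⬝ᵥ D.mulVec v) :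
    ∀ i ∈ C, D.mulVec wbar i ≤ 0 ∧ (wbar i < 0 → D.mulVec wbar i = 0) := by
  rw [hS, setOf_constraints_eq_coordinateConstraints_inter D hAB] at hwbarS hmin
  exact constrained_quadratic_minimiser_kkt_general hD.posSemidef (by simp [*]) (by simp [*])
    hwbarS hmin
end

section
/- Let Σ be a symmetric positive definite n×n real matrix with D = Σ^{-1}, and suppose every row sum a_i = ∑_j D_{ij} is strictly positive. Then the vector w̄ with w̄_i = a_i / ∑_{j=1}^n a_j is the unique minimiser of w ↦ wᵀ Σ w over the simplex Δ = {w ∈ ℝ^n : w_i ≥ 0 for all i, ∑_{i=1}^n w_i = 1}. -/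
open Matrix

/-!
The vector `w̄` solves the Lagrange condition `Σ w̄ = c • 1`. So, for every `v` with `∑ i, v i = 1`,
the difference `v - w̄` is `Σ`-orthogonal to `w̄`, and Pythagoras gives
`vᵀ Σ v = w̄ᵀ Σ w̄ + (v - w̄)ᵀ Σ (v - w̄)`. This makes `w̄` the unique minimiser on the hyperplane
`∑ i, v i = 1`, which contains the simplex; since the row sums are nonnegative, `w̄` lies in the
simplex.
-/

section QuadraticForm

variable {R ι : Type*} [Ring R] [StarRing R] [Fintype ι] {M : Matrix ι ι R} {x y : ι → R}

theorem star_dotProduct_mulVec_self_eq_add (hM : M.IsHermitian)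
    (horth : star (x - y) ⬝ᵥ M *ᵥ y = 0) :
    star x ⬝ᵥ M *ᵥ x = star y ⬝ᵥ M *ᵥ y + star (x - y) ⬝ᵥ M *ᵥ (x - y) := by
  have horth' : star y ⬝ᵥ M *ᵥ (x - y) = 0 := by
    rw [dotProduct_mulVec, ← hM.eq, ← star_mulVec, star_dotProduct, horth, star_zero]
  calc star x ⬝ᵥ M *ᵥ x
      = star (y + (x - y)) ⬝ᵥ M *ᵥ (y + (x - y)) := by rw [add_sub_cancel]
    _ = star y ⬝ᵥ M *ᵥ y + star (x - y) ⬝ᵥ M *ᵥ (x - y) := by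
        rw [star_add, mulVec_add, add_dotProduct, dotProduct_add, dotProduct_add, horth, horth',
          add_zero, zero_add]

variable [PartialOrder R] [IsOrderedAddMonoid R]

theorem star_dotProduct_mulVec_self_lt (hM : M.PosDef)
    (horth : star (x - y) ⬝ᵥ M *ᵥ y = 0) (hne : x ≠ y) :
    star y ⬝ᵥ M *ᵥ y < star x ⬝ᵥ M *ᵥ x := by
  rw [star_dotProduct_mulVec_self_eq_add hM.isHermitian horth]
  exact lt_add_of_pos_right _ (hM.dotProduct_mulVec_pos (sub_ne_zero.mpr hne))

end QuadraticForm

section MinVarianceWeights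

variable {K ι : Type*} [Field K] [Fintype ι] [DecidableEq ι]

/-- The weights of the minimum variance portfolio with covariance matrix `M`: the row sums of `M⁻¹`,
scaled to have total `1`. They are junk when `M` is singular or its inverse has entries adding up to
`0`; neither happens for a positive definite `M` on a nonempty index type. -/
noncomputable def minVarianceWeights (M : Matrix ι ι K) : ι → K :=
  fun i => (M⁻¹ *ᵥ 1) i / ∑ j, (M⁻¹ *ᵥ 1) j

theorem mulVec_minVarianceWeights {M : Matrix ι ι K} (hM : IsUnit M) :
    M *ᵥ minVarianceWeights M = (∑ j, (M⁻¹ *ᵥ 1) j)⁻¹ • 1 := by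
  have hsmul : minVarianceWeights M = (∑ j, (M⁻¹ *ᵥ 1) j)⁻¹ • M⁻¹ *ᵥ 1 :=
    funext fun _ => div_eq_inv_mul _ _
  rw [hsmul, mulVec_smul, mulVec_mulVec, mul_nonsing_inv _ ((isUnit_iff_isUnit_det M).mp hM),
    one_mulVec]

section PartialOrder

variable [PartialOrder K] [StarRing K] [Nonempty ι] {M : Matrix ι ι K} {v : ι → K}

theorem sum_inv_mulVec_one_pos (hM : M.PosDef) : 0 < ∑ i, (M⁻¹ *ᵥ 1) i := by
  simpa only [star_one, one_dotProduct] using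
    hM.inv.dotProduct_mulVec_pos (one_ne_zero : (1 : ι → K) ≠ 0)

theorem sum_minVarianceWeights (hM : M.PosDef) : ∑ i, minVarianceWeights M i = 1 := by
  simp only [minVarianceWeights, ← Finset.sum_div, div_self (sum_inv_mulVec_one_pos hM).ne']

theorem star_sub_dotProduct_mulVec_minVarianceWeights (hM : M.PosDef) (hv : ∑ i, v i = 1) :
    star (v - minVarianceWeights M) ⬝ᵥ M *ᵥ minVarianceWeights M = 0 := by
  have hsum : ∑ i, (v - minVarianceWeights M) i = 0 := by
    simp only [Pi.sub_apply, Finset.sum_sub_distrib, hv, sum_minVarianceWeights hM, sub_self]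
  rw [mulVec_minVarianceWeights hM.isUnit, dotProduct_smul, star_dotProduct, star_one,
    one_dotProduct, hsum, star_zero, smul_zero]

theorem star_minVarianceWeights_dotProduct_mulVec_lt [IsOrderedAddMonoid K] (hM : M.PosDef)
    (hv : ∑ i, v i = 1) (hne : v ≠ minVarianceWeights M) :
    star (minVarianceWeights M) ⬝ᵥ M *ᵥ minVarianceWeights M < star v ⬝ᵥ M *ᵥ v :=
  star_dotProduct_mulVec_self_lt hM (star_sub_dotProduct_mulVec_minVarianceWeights hM hv) hne

end PartialOrder

section LinearOrder

variable [LinearOrder K] [IsStrictOrderedRing K] [StarRing K] [Nonempty ι] {M : Matrix ι ι K}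

theorem minVarianceWeights_mem_stdSimplex (hM : M.PosDef) (hnonneg : 0 ≤ M⁻¹ *ᵥ 1) :
    minVarianceWeights M ∈ stdSimplex K ι :=
  ⟨fun i => div_nonneg (hnonneg i) (sum_inv_mulVec_one_pos hM).le, sum_minVarianceWeights hM⟩

theorem minimum_variance_portfolio_positive_row_sums_general (hM : M.PosDef)
    (hnonneg : 0 ≤ M⁻¹ *ᵥ 1) :
    minVarianceWeights M ∈ stdSimplex K ι ∧
    IsMinOn (fun v => star v ⬝ᵥ M *ᵥ v) (stdSimplex K ι) (minVarianceWeights M) ∧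
    ∀ v ∈ stdSimplex K ι, IsMinOn (fun v => star v ⬝ᵥ M *ᵥ v) (stdSimplex K ι) v →
      v = minVarianceWeights M := by
  have hmem := minVarianceWeights_mem_stdSimplex hM hnonneg
  refine ⟨hmem, fun v hv => ?_, fun v hv hmin => ?_⟩
  · obtain rfl | hne := eq_or_ne v (minVarianceWeights M)
    · exact le_rfl
    · exact (star_minVarianceWeights_dotProduct_mulVec_lt hM hv.2 hne).le
  · by_contra hne
    exact (star_minVarianceWeights_dotProduct_mulVec_lt hM hv.2 hne).not_ge (hmin hmem)

end LinearOrder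

end MinVarianceWeights

/-- If every row sum `a_i = ∑ j, D i j` of `D = Σ⁻¹` is strictly
positive, then the vector `w̄` with `w̄_i = a_i / ∑ j, a_j` is the unique
minimiser of `w ↦ wᵀ Σ w` over the simplex
`Δ = {w : ∀ i, w i ≥ 0, ∑ i, w i = 1}`. -/
theorem minimum_variance_portfolio_positive_row_sums
    (n : ℕ) (hn : 1 ≤ n)
    (Sig : Matrix (Fin n) (Fin n) ℝ) (hSig : Sig.PosDef)
    (D : Matrix (Fin n) (Fin n) ℝ) (hD : D = Sig⁻¹)
    (a : Fin n → ℝ) (ha : a = D.mulVec 1)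
    (hapos : ∀ i, 0 < a i) :
    let wbar : Fin n → ℝ := fun i => a i / ∑ j, a j
    (∀ i, 0 ≤ wbar i) ∧ (∑ i, wbar i = 1) ∧
    (∀ v : Fin n → ℝ, (∀ i, 0 ≤ v i) → (∑ i, v i = 1) →
      wbar ⬝ᵥ Sig.mulVec wbar ≤ v ⬝ᵥ Sig.mulVec v) ∧
    (∀ v : Fin n → ℝ, (∀ i, 0 ≤ v i) → (∑ i, v i = 1) →
      (∀ u : Fin n → ℝ, (∀ i, 0 ≤ u i) → (∑ i, u i = 1) →
        v ⬝ᵥ Sig.mulVec v ≤ u ⬝ᵥ Sig.mulVec u) → v = wbar) := by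
  subst hD ha
  have : Nonempty (Fin n) := ⟨⟨0, hn⟩⟩
  obtain ⟨hmem, hmin, huniq⟩ :=
    minimum_variance_portfolio_positive_row_sums_general hSig fun i => (hapos i).le
  exact ⟨hmem.1, hmem.2, fun v hv0 hv1 => hmin ⟨hv0, hv1⟩,
    fun v hv0 hv1 hle => huniq v ⟨hv0, hv1⟩ fun u hu => hle u hu.1 hu.2⟩
end
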